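/- arXiv:0708.3105 — 2 statements merged into one kernel-verified Lean document; each statement's English description precedes it below -/
import Mathlib

section
/- Let k be an algebraically closed field and let (A,m) be a Noetherian local domain, essentially of finite type over k with residue field A/m = k, which is integrally closed in its fraction field. If a, b ∈ A and a ∉ bA, then there exists a k-algebra homomorphism ρ : A → k[[z]] with ρ(m) ⊆ (z) such that ρ(a) ∉ ρ(b)·k[[z]]. -/
/-!
Put `t = b / a` in the fraction field `K`. As `a / b` is not integral over `A`, no relation
`f(t) = 0` over `A` has a unit constant term, so the kernel `p` of `A[X] → K, X ↦ t` lies in the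
maximal ideal `J = (m, X)`. An arc through `J` in `A[X] / p` that does not kill `a` is then what we
want: it sends `X` into `(z)`, and `ρ(a) ρ(X) = ρ(b)` with `ρ(a) ≠ 0`, hence `ρ(a) ∉ (ρ(b))`.

To find the arc, localize at `J` and choose a prime `q ⊇ p` maximal among those avoiding `a`. All
nonzero primes of the quotient `B` by `q` contain `a`, so the finitely many minimal primes over `a`,
of height one by Krull's Hauptidealsatz, cover the maximal ideal of `B`, and `dim B ≤ 1` by prime
avoidance. By Krull–Akizuki a valuation ring dominating `B` is discrete with residue field finite
over `k`, hence equal to `k`, and expansion in powers of a uniformizer embeds it into `k⟦z⟧`.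
-/

section Expansion

open Polynomial PowerSeries

variable {R k V : Type*} [CommRing R] [Field k] [CommRing V] [Algebra R V] [Algebra k V] {π : V}

theorem X_pow_dvd_of_pow_dvd_aeval [IsDomain V] (hπ0 : π ≠ 0) (hπ : ¬ IsUnit π) {n : ℕ} {p : k[X]}
    (h : π ^ n ∣ aeval π p) : Polynomial.X ^ n ∣ p := by
  induction n with
  | zero => simp
  | succ n ih =>
    obtain ⟨g, rfl⟩ := ih ((pow_dvd_pow π n.le_succ).trans h)
    rw [map_mul, map_pow, aeval_X, pow_succ, mul_dvd_mul_iff_left (pow_ne_zero n hπ0),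
      ← divX_mul_X_add g, map_add, map_mul, aeval_X, aeval_C,
      dvd_add_right (dvd_mul_left _ _)] at h
    rw [pow_succ]
    refine mul_dvd_mul_left _ (Polynomial.X_dvd_iff.2 ?_)
    by_contra hg
    exact hπ (isUnit_of_dvd_unit h ((IsUnit.mk0 _ hg).map (algebraMap k V)))

variable (R π) in
/-- The graph of `π`-adic expansion: the pairs `(x, f)` that are approximated to every order by
`(p(π), p(X))` for a common polynomial `p`. Being the closure of the graph of `p(π) ↦ p(X)`, it is
visibly a subalgebra, so expansion is multiplicative as soon as it is single-valued. -/
def adicExpansionGraph : Subalgebra R (V × R⟦X⟧) where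
  carrier := {x | ∀ n, ∃ p : R[X], π ^ n ∣ x.1 - aeval π p ∧ (X : R⟦X⟧) ^ n ∣ x.2 - p}
  mul_mem' hx hy n := by
    obtain ⟨p, hp, hp'⟩ := hx n
    obtain ⟨q, hq, hq'⟩ := hy n
    exact ⟨p * q, by simpa using dvd_mul_sub_mul hp hq, by simpa using dvd_mul_sub_mul hp' hq'⟩
  add_mem' hx hy n := by
    obtain ⟨p, hp, hp'⟩ := hx n
    obtain ⟨q, hq, hq'⟩ := hy n
    exact ⟨p + q, by simpa [add_sub_add_comm] using dvd_add hp hq,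
      by simpa [add_sub_add_comm] using dvd_add hp' hq'⟩
  algebraMap_mem' c n := ⟨Polynomial.C c, by simp, by simp⟩

theorem mk_self_X_mem_adicExpansionGraph : (π, PowerSeries.X) ∈ adicExpansionGraph R π :=
  fun _ ↦ ⟨Polynomial.X, by simp, by simp⟩

theorem eq_zero_of_forall_X_pow_dvd {f : R⟦X⟧} (h : ∀ n, (X : R⟦X⟧) ^ n ∣ f) : f = 0 :=
  PowerSeries.ext fun n ↦ PowerSeries.X_pow_dvd_iff.1 (h (n + 1)) n n.lt_succ_self

theorem pow_dvd_of_mk_zero_mem_adicExpansionGraph {x : V} (h : (x, 0) ∈ adicExpansionGraph R π)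
    (n : ℕ) : π ^ n ∣ x := by
  obtain ⟨p, hxp, hp⟩ := h n
  rw [zero_sub, dvd_neg, PowerSeries.X_pow_dvd_iff] at hp
  have hXp : Polynomial.X ^ n ∣ p := Polynomial.X_pow_dvd_iff.2 (by simpa using hp)
  refine (dvd_iff_dvd_of_dvd_sub hxp).2 ?_
  simpa using map_dvd (aeval π) hXp

theorem exists_mem_adicExpansionGraph (hres : ∀ x : V, ∃ c : R, π ∣ x - algebraMap R V c) (x : V) :
    ∃ f, (x, f) ∈ adicExpansionGraph R π := by
  choose digit tail htail using hres
  let f : R⟦X⟧ := .mk fun n ↦ digit (tail^[n] x)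
  refine ⟨f, fun n ↦ ⟨trunc n f, ⟨tail^[n] x, ?_⟩, ?_⟩⟩
  · induction n with
    | zero => simp
    | succ n ih =>
      rw [trunc_succ, map_add, ← sub_sub, ih, aeval_monomial, coeff_mk, pow_succ, mul_assoc,
        Function.iterate_succ_apply', ← htail]
      ring
  · rw [PowerSeries.X_pow_dvd_iff]
    intro m hm
    rw [map_sub, coeff_coe_trunc_of_lt hm, sub_self]

theorem eq_zero_of_zero_mk_mem_adicExpansionGraph [IsDomain V] (hπ0 : π ≠ 0) (hπ : ¬ IsUnit π)
    {f : k⟦X⟧} (h : (0, f) ∈ adicExpansionGraph k π) : f = 0 := by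
  refine eq_zero_of_forall_X_pow_dvd fun n ↦ ?_
  obtain ⟨p, hp, hfp⟩ := h n
  rw [zero_sub, dvd_neg] at hp
  have hXp : (X : k⟦X⟧) ^ n ∣ p := by
    simpa using map_dvd coeToPowerSeries.ringHom (X_pow_dvd_of_pow_dvd_aeval hπ0 hπ hp)
  exact (dvd_iff_dvd_of_dvd_sub hfp).2 hXp

theorem exists_injective_algHom_powerSeries_of_forall_dvd_sub [IsDomain V] [IsNoetherianRing V]
    (hπ0 : π ≠ 0) (hπ : ¬ IsUnit π) (hres : ∀ x : V, ∃ c : k, π ∣ x - algebraMap k V c) :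
    ∃ ρ : V →ₐ[k] k⟦X⟧, Function.Injective ρ ∧ ρ π = PowerSeries.X := by
  let fst : adicExpansionGraph k π →ₐ[k] V := (AlgHom.fst k V k⟦X⟧).comp (Subalgebra.val _)
  have hfst : Function.Bijective fst := by
    refine ⟨(injective_iff_map_eq_zero fst).2 ?_, fun x ↦ ?_⟩
    · rintro ⟨⟨x, f⟩, hxf⟩ (rfl : x = 0)
      obtain rfl := eq_zero_of_zero_mk_mem_adicExpansionGraph hπ0 hπ hxf
      rfl
    · obtain ⟨f, hf⟩ := exists_mem_adicExpansionGraph hres x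
      exact ⟨⟨(x, f), hf⟩, rfl⟩
  let e := AlgEquiv.ofBijective fst hfst
  let ρ : V →ₐ[k] k⟦X⟧ := (AlgHom.snd k V k⟦X⟧).comp ((Subalgebra.val _).comp e.symm.toAlgHom)
  have hρ {x f} (h : (x, f) ∈ adicExpansionGraph k π) : ρ x = f :=
    congr(($(e.symm_apply_apply ⟨(x, f), h⟩)).1.2)
  refine ⟨ρ, (injective_iff_map_eq_zero ρ).2 fun x hx ↦ ?_, hρ mk_self_X_mem_adicExpansionGraph⟩
  obtain ⟨f, hf⟩ := exists_mem_adicExpansionGraph hres x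
  obtain rfl : f = 0 := (hρ hf).symm.trans hx
  have hmem : x ∈ ⨅ n : ℕ, Ideal.span {π} ^ n := by
    simpa [Ideal.mem_iInf, Ideal.span_singleton_pow, Ideal.mem_span_singleton] using
      pow_dvd_of_mk_zero_mem_adicExpansionGraph hf
  rwa [Ideal.iInf_pow_eq_bot_of_isDomain _ (by rwa [Ne, Ideal.span_singleton_eq_top])] at hmem

end Expansion

section ModuleQuotient

open scoped Pointwise

variable {R N M : Type*} [CommRing R] [AddCommGroup N] [Module R N] [AddCommGroup M] [Module R M]

theorem exists_pow_smul_mem_range_of_isArtinian (f : N →ₗ[R] M) {c : R} (hc : IsSMulRegular M c)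
    [IsArtinian R (QuotSMulTop c N)] (hf : ∀ x, ∃ n, c ^ n • x ∈ LinearMap.range f) :
    ∃ n, ∀ x, ∃ y z, c ^ n • y ∈ LinearMap.range f ∧ x = y + c • z := by
  let I (n : ℕ) : Submodule R N := (c ^ n • (⊤ : Submodule R M)).comap f
  have hI {n b} : b ∈ I n ↔ ∃ z, c ^ n • z = f b := by
    simp [I, Submodule.mem_smul_pointwise_iff_exists]
  -- The images of the `I n` in `N / cN` stabilise; past that point the exponent in
  -- `c ^ (m + 1) • x ∈ range f` can be lowered by correcting `x` modulo `c`.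
  have hanti : Antitone fun n ↦ (I n).map (c • (⊤ : Submodule R N)).mkQ := by
    refine antitone_nat_of_succ_le fun n ↦ Submodule.map_mono fun b hb ↦ ?_
    obtain ⟨z, hz⟩ := hI.1 hb
    exact hI.2 ⟨c • z, by rw [← mul_smul, ← pow_succ, hz]⟩
  obtain ⟨n, hn⟩ := IsArtinian.monotone_stabilizes ⟨_, hanti.dual_right⟩
  have descend {m x} (hm : n ≤ m + 1) (hx : c ^ (m + 1) • x ∈ LinearMap.range f) :
      ∃ z, c ^ m • (x - c • z) ∈ LinearMap.range f := by
    obtain ⟨b, hb⟩ := hx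
    have hstab : (I (m + 1)).map (c • (⊤ : Submodule R N)).mkQ =
        (I (m + 2)).map (c • (⊤ : Submodule R N)).mkQ :=
      (hn _ hm).symm.trans (hn _ (hm.trans (Nat.le_succ _)))
    obtain ⟨b', hb', hbb'⟩ := hstab.le (Submodule.mem_map_of_mem (hI.2 ⟨x, hb.symm⟩))
    obtain ⟨d, -, hd⟩ := (Submodule.mem_smul_pointwise_iff_exists _ _ _).1
      ((Submodule.Quotient.eq _).1 hbb'.symm)
    obtain ⟨z, hz⟩ := hI.1 hb'
    refine ⟨z, d, hc ?_⟩
    change c • f d = c • _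
    rw [← map_smul, hd, map_sub, hb, ← hz]
    module
  refine ⟨n, fun x ↦ ?_⟩
  obtain ⟨m, hm⟩ := hf x
  induction m generalizing x with
  | zero => exact ⟨x, 0, by simpa using Submodule.smul_mem _ (c ^ n) hm, by simp⟩
  | succ m ih =>
    rcases le_or_gt (m + 1) n with hmn | hmn
    · refine ⟨x, 0, ?_, by simp⟩
      rw [← Nat.sub_add_cancel hmn, pow_add, mul_smul]
      exact Submodule.smul_mem _ _ hm
    · obtain ⟨z, hz⟩ := descend hmn.le hm
      obtain ⟨y, z', hy, hyz⟩ := ih _ hz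
      exact ⟨y, z' + z, hy, by rw [smul_add, ← add_assoc, ← hyz, sub_add_cancel]⟩

theorem finite_quotSMulTop_of_isArtinian [IsNoetherian R N] (f : N →ₗ[R] M) {c : R}
    (hc : IsSMulRegular M c) [IsArtinian R (QuotSMulTop c N)]
    (hf : ∀ x, ∃ n, c ^ n • x ∈ LinearMap.range f) : Module.Finite R (QuotSMulTop c M) := by
  obtain ⟨n, hn⟩ := exists_pow_smul_mem_range_of_isArtinian f hc hf
  let M' := (LinearMap.range f).comap (LinearMap.lsmul R M (c ^ n))
  let g : M' →ₗ[R] LinearMap.range f := (LinearMap.lsmul R M (c ^ n)).restrict fun _ ↦ id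
  have hg : Function.Injective g := fun x y hxy ↦ Subtype.ext (hc.pow n congr(($hxy).1))
  have := Module.Finite.of_injective g hg
  refine .of_surjective ((c • (⊤ : Submodule R M)).mkQ.comp M'.subtype) fun x ↦ ?_
  obtain ⟨x, rfl⟩ := Submodule.mkQ_surjective _ x
  obtain ⟨y, z, hy, rfl⟩ := hn x
  refine ⟨⟨y, hy⟩, (Submodule.Quotient.eq' _).2 ?_⟩
  simpa using Submodule.smul_mem_pointwise_smul z c ⊤ trivial

end ModuleQuotient

section KrullAkizuki

open scoped Pointwise

open IsLocalRing

variable {B : Type*} [CommRing B] [IsDomain B] [IsLocalRing B]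

theorem exists_dvd_pow_of_mem_maximalIdeal [Ring.KrullDimLE 1 B] {c d : B}
    (hc : c ∈ maximalIdeal B) (hd : d ≠ 0) : ∃ n, d ∣ c ^ n := by
  suffices c ∈ (Ideal.span {d}).radical by
    simpa [Ideal.mem_radical_iff, Ideal.mem_span_singleton] using this
  rw [Ideal.radical_eq_sInf, Submodule.mem_sInf]
  rintro p ⟨hdp, hp⟩
  have hp0 : p ≠ ⊥ := by
    rintro rfl
    exact hd (by simpa using hdp)
  rwa [eq_maximalIdeal (hp.isMaximal_of_ne_bot hp0)]

variable (L : Type*) {C : Type*} [IsNoetherianRing B] [Ring.KrullDimLE 1 B] [Field L]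
  [Algebra B L] [IsFractionRing B L] [CommRing C] [Algebra B C] [Algebra C L] [IsScalarTower B C L]
  [FaithfulSMul C L]

include L in
theorem finite_quotient_span_algebraMap {c : B} (hc : c ≠ 0) :
    Module.Finite B (C ⧸ Ideal.span {algebraMap B C c}) := by
  have hCL := FaithfulSMul.algebraMap_injective C L
  have := hCL.isDomain
  by_cases hcu : IsUnit c
  · have := Ideal.Quotient.subsingleton_iff.2
      (Ideal.span_singleton_eq_top.2 (hcu.map (algebraMap B C)))
    infer_instance
  have hreg : IsSMulRegular C c := by
    have hcL : algebraMap B L c ≠ 0 := (map_ne_zero_iff _ (IsFractionRing.injective B L)).2 hc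
    intro x y hxy
    refine hCL (mul_left_cancel₀ hcL ?_)
    simpa [Algebra.smul_def, ← IsScalarTower.algebraMap_apply] using congr(algebraMap C L $hxy)
  have : IsArtinian B (QuotSMulTop c B) := by
    have := isFiniteLength_quotient_span_singleton B (mem_nonZeroDivisors_of_ne_zero hc)
    rw [← Ideal.mul_top (Ideal.span {c}), ← smul_eq_mul,
      Submodule.ideal_span_singleton_smul] at this
    exact (isFiniteLength_iff_isNoetherian_isArtinian.1 this).2
  have hrange (x : C) : ∃ n, c ^ n • x ∈ LinearMap.range (Algebra.linearMap B C) := by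
    obtain ⟨⟨b, d⟩, hbd⟩ := IsLocalization.surj (nonZeroDivisors B) (algebraMap C L x)
    obtain ⟨n, e, he⟩ := exists_dvd_pow_of_mem_maximalIdeal hcu (nonZeroDivisors.ne_zero d.2)
    refine ⟨n, e * b, hCL ?_⟩
    simp only [Algebra.linearMap_apply, ← IsScalarTower.algebraMap_apply, he, Algebra.smul_def,
      map_mul, ← hbd]
    ring
  have := finite_quotSMulTop_of_isArtinian _ hreg hrange
  have hspan : c • ⊤ = (Ideal.span {algebraMap B C c}).restrictScalars B := by
    ext x
    simp [Submodule.mem_smul_pointwise_iff_exists, Ideal.mem_span_singleton, dvd_def,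
      Algebra.smul_def, eq_comm]
  exact .equiv ((Submodule.quotEquivOfEq _ _ hspan).trans
    (Submodule.Quotient.restrictScalarsEquiv B _))

variable (B) in
include B L in
/-- The Krull–Akizuki theorem over a local base, without extension of the fraction field. -/
theorem isNoetherianRing_of_krullDimLE_one : IsNoetherianRing C := by
  have hCL := FaithfulSMul.algebraMap_injective C L
  have := hCL.isDomain
  have := IsLocalization.isAlgebraic L (nonZeroDivisors B)
  have : Algebra.IsAlgebraic B C := .of_injective (IsScalarTower.toAlgHom B C L) hCL
  refine (isNoetherianRing_iff_ideal_fg C).2 fun I ↦ ?_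
  rcases eq_or_ne I ⊥ with rfl | hI
  · exact Submodule.fg_bot
  obtain ⟨x, hxI, hx⟩ := Submodule.exists_mem_ne_zero_of_ne_bot hI
  obtain ⟨c, hcI, hc⟩ := Submodule.exists_mem_ne_zero_of_ne_bot
    (Ideal.comap_ne_bot_of_algebraic_mem hx hxI (Algebra.IsAlgebraic.isAlgebraic (R := B) x))
  have := finite_quotient_span_algebraMap L (C := C) hc
  have : IsNoetherianRing (C ⧸ Ideal.span {algebraMap B C c}) :=
    isNoetherian_of_tower B inferInstance
  refine Ideal.fg_of_fg_map_of_fg_inf_ker_of_surjective (IsNoetherian.noetherian _) ?_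
    (Ideal.Quotient.mk_surjective (I := Ideal.span {algebraMap B C c}))
  rw [Ideal.mk_ker, inf_eq_right.2 (I.span_singleton_le_iff_mem.2 hcI)]
  exact Submodule.fg_span_singleton _

end KrullAkizuki

section DominatingValuationRing

open IsLocalRing

theorem surjective_algebraMap_residueField_of_isIntegral {k B V : Type*} [Field k] [IsAlgClosed k]
    [CommRing B] [IsLocalRing B] [CommRing V] [IsLocalRing V] [Algebra k B] [Algebra B V]
    [Algebra k V] [IsScalarTower k B V] [Algebra.IsIntegral B (ResidueField V)]
    [IsLocalHom (algebraMap B V)]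
    (hB : Function.Surjective (algebraMap k (ResidueField B))) :
    Function.Surjective (algebraMap k (ResidueField V)) := by
  have : Algebra.IsIntegral (ResidueField B) (ResidueField V) := .tower_top B
  have : Algebra.IsIntegral k (ResidueField B) := Algebra.isIntegral_of_surjective hB
  have : Algebra.IsIntegral k (ResidueField V) := .trans (ResidueField B)
  exact (IsAlgClosed.algebraMap_bijective_of_isIntegral).2

variable (B L : Type*) {V : Type*} [CommRing B] [IsDomain B] [IsLocalRing B] [IsNoetherianRing B]
  [Ring.KrullDimLE 1 B] [Field L] [Algebra B L] [IsFractionRing B L] [CommRing V] [Algebra B V]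
  [IsLocalHom (algebraMap B V)] [Algebra V L] [IsScalarTower B V L] [FaithfulSMul V L]

include L in
theorem isDiscreteValuationRing_of_isLocalHom [IsDomain V] [ValuationRing V]
    (hB : ¬ IsField B) : IsDiscreteValuationRing V := by
  have := isNoetherianRing_of_krullDimLE_one B L (C := V)
  have hV : ¬ IsField V := by
    obtain ⟨c, hc, hcu⟩ := Ring.exists_not_isUnit_of_not_isField hB
    intro hV
    have hcV : algebraMap B V c ∈ maximalIdeal V := by simpa using hcu
    rw [isField_iff_maximalIdeal_eq.1 hV, Ideal.mem_bot] at hcV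
    refine hc (IsFractionRing.injective B L ?_)
    rw [IsScalarTower.algebraMap_apply B V L, hcV, map_zero, map_zero]
  exact ((IsDiscreteValuationRing.TFAE V hV).out 0 1 rfl rfl).2 inferInstance

variable {B} in
include L in
theorem finite_residueField_of_isLocalHom [IsLocalRing V] (hB : ¬ IsField B) :
    Module.Finite B (ResidueField V) := by
  obtain ⟨c, hc, hcu⟩ := Ring.exists_not_isUnit_of_not_isField hB
  have := finite_quotient_span_algebraMap L (C := V) hc
  have hle : Ideal.span {algebraMap B V c} ≤ maximalIdeal V :=
    (Ideal.span_singleton_le_iff_mem _).2 (by simpa using hcu)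
  exact .of_surjective (Ideal.Quotient.factorₐ B hle).toLinearMap
    (Ideal.Quotient.factor_surjective hle)

end DominatingValuationRing

section DimensionOne

open IsLocalRing

theorem exists_injective_algHom_powerSeries_of_isDiscreteValuationRing {k V : Type*} [Field k]
    [CommRing V] [IsDomain V] [IsDiscreteValuationRing V] [Algebra k V]
    (hV : Function.Surjective (algebraMap k (ResidueField V))) :
    ∃ ρ : V →ₐ[k] PowerSeries k, Function.Injective ρ ∧ IsLocalHom ρ := by
  obtain ⟨π, hπ⟩ := IsDiscreteValuationRing.exists_irreducible V
  have hmem {x : V} : x ∈ maximalIdeal V ↔ π ∣ x := by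
    rw [hπ.maximalIdeal_eq, Ideal.mem_span_singleton]
  obtain ⟨ρ, hρ, hρπ⟩ := exists_injective_algHom_powerSeries_of_forall_dvd_sub hπ.ne_zero
    hπ.not_isUnit fun x ↦ by
      obtain ⟨c, hc⟩ := hV (residue V x)
      exact ⟨c, hmem.1 (Ideal.Quotient.eq.1 hc.symm)⟩
  refine ⟨ρ, hρ, ⟨fun x ↦ ?_⟩⟩
  contrapose!
  intro hx
  have := map_dvd ρ (hmem.1 hx)
  rw [hρπ] at this
  exact not_isUnit_of_not_isUnit_dvd PowerSeries.X_prime.not_isUnit this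

theorem surjective_algebraMap_of_isField {k B : Type*} [CommRing k] [CommRing B]
    [IsLocalRing B] [Algebra k B] (hfield : IsField B)
    (hB : Function.Surjective (algebraMap k (ResidueField B))) :
    Function.Surjective (algebraMap k B) := by
  intro x
  obtain ⟨c, hc⟩ := hB (residue B x)
  have hcx : x - algebraMap k B c ∈ maximalIdeal B := Ideal.Quotient.eq.1 hc.symm
  rw [isField_iff_maximalIdeal_eq.1 hfield, Ideal.mem_bot, sub_eq_zero] at hcx
  exact ⟨c, hcx.symm⟩

theorem exists_injective_algHom_powerSeries_of_krullDimLE_one {k B : Type*} [Field k]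
    [IsAlgClosed k] [CommRing B] [IsDomain B] [IsLocalRing B] [IsNoetherianRing B]
    [Ring.KrullDimLE 1 B] [Algebra k B] (hB : Function.Surjective (algebraMap k (ResidueField B))) :
    ∃ ρ : B →ₐ[k] PowerSeries k, Function.Injective ρ ∧ IsLocalHom ρ := by
  by_cases hfield : IsField B
  · let := hfield.toField
    have hk : Function.Bijective (algebraMap k B) :=
      ⟨(algebraMap k B).injective, surjective_algebraMap_of_isField hfield hB⟩
    let e := (AlgEquiv.ofBijective (Algebra.ofId k B) hk).symm
    exact ⟨(Algebra.ofId k _).comp e.toAlgHom, RingHom.injective _, inferInstance⟩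
  let L := FractionRing B
  obtain ⟨V, hV, hloc⟩ := exists_factor_valuationRing (algebraMap B L)
  let := ((algebraMap B L).codRestrict V.toSubring hV).toAlgebra
  let := ((algebraMap B V).comp (algebraMap k B)).toAlgebra
  have : IsScalarTower k B V := .of_algebraMap_eq fun _ ↦ rfl
  have : IsScalarTower B V L := .of_algebraMap_eq fun _ ↦ rfl
  have : IsLocalHom (algebraMap B V) := hloc
  have := isDiscreteValuationRing_of_isLocalHom B L (V := V) hfield
  have := finite_residueField_of_isLocalHom L (B := B) (V := V) hfield
  obtain ⟨ρ, hρ, hρloc⟩ := exists_injective_algHom_powerSeries_of_isDiscreteValuationRing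
    (surjective_algebraMap_residueField_of_isIntegral (k := k) (B := B) (V := V) hB)
  refine ⟨ρ.comp (IsScalarTower.toAlgHom k B V), hρ.comp ?_, ?_⟩
  · refine Function.Injective.of_comp (f := algebraMap V L) ?_
    exact IsFractionRing.injective B L
  · exact ⟨fun x hx ↦ .of_map (algebraMap B V) x (.of_map ρ _ hx)⟩

end DimensionOne

section Primes

variable {R : Type*} [CommRing R] [IsNoetherianRing R]

open Ideal in
theorem eq_of_le_of_mem_minimalPrimes_span_singleton [IsDomain R] {p q : Ideal R} {c : R}
    (hp : p ∈ (span {c}).minimalPrimes) (hq : q.IsPrime) (hq0 : q ≠ ⊥) (hqp : q ≤ p) : q = p := by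
  refine hqp.eq_of_not_lt fun hlt ↦ hq0 ?_
  have := hp.1.1
  have hle : q.height + 1 ≤ 0 + 1 := (height_add_one_le_of_lt_of_isPrime hlt).trans
    ((height_le_one_of_isPrincipal_of_mem_minimalPrimes _ p hp).trans_eq (zero_add 1).symm)
  have hmin := height_eq_zero_iff.1
    (le_zero_iff.1 ((ENat.add_le_add_iff_right ENat.one_ne_top).1 hle))
  simpa [IsDomain.minimalPrimes_eq_singleton_bot] using hmin

open Ideal in
theorem krullDimLE_one_of_forall_isPrime_mem [IsDomain R] {a : R} (ha0 : a ≠ 0)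
    (ha : ∀ p : Ideal R, p.IsPrime → p ≠ ⊥ → a ∈ p) : Ring.KrullDimLE 1 R := by
  refine .mk₁' fun p hp0 hp ↦ ?_
  obtain ⟨m, hm, hpm⟩ := exists_le_maximal p hp.ne_top
  suffices hcover : (m : Set R) ⊆ ⋃ q ∈ (span {a}).minimalPrimes, q by
    obtain ⟨q, hq, hmq⟩ := (m.subset_union_prime_finite
      (finite_minimalPrimes_of_isNoetherianRing R _) (f := id) 0 0 fun q hq _ _ ↦ hq.1.1).1 hcover
    obtain rfl : m = q := hm.eq_of_le hq.1.1.ne_top hmq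
    rwa [eq_of_le_of_mem_minimalPrimes_span_singleton hq hp hp0 hpm]
  have hminimal (q : Ideal R) (hq : q.IsPrime) (hq0 : q ≠ ⊥) :
      ∃ r ∈ (span {a}).minimalPrimes, r ≤ q :=
    exists_minimalPrimes_le ((span_singleton_le_iff_mem q).2 (ha q hq hq0))
  intro c hc
  rcases eq_or_ne c 0 with rfl | hc0
  · obtain ⟨r, hr, -⟩ := hminimal p hp hp0
    exact Set.mem_biUnion hr r.zero_mem
  · obtain ⟨q, hq, -⟩ := exists_minimalPrimes_le ((span_singleton_le_iff_mem m).2 hc)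
    have hcq : c ∈ q := (span_singleton_le_iff_mem q).1 hq.1.2
    obtain ⟨r, hr, hrq⟩ := hminimal q hq.1.1 fun h ↦ hc0 (by simpa [h] using hcq)
    have hr0 : r ≠ ⊥ := fun h ↦ ha0 (by simpa [h] using hr.1.2)
    rw [← eq_of_le_of_mem_minimalPrimes_span_singleton hq hr.1.1 hr0 hrq] at hcq
    exact Set.mem_biUnion hr hcq

theorem exists_isPrime_krullDimLE_one_quotient {p : Ideal R} [p.IsPrime] {a : R} (ha : a ∉ p) :
    ∃ q : Ideal R, q.IsPrime ∧ p ≤ q ∧ a ∉ q ∧ Ring.KrullDimLE 1 (R ⧸ q) := by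
  obtain ⟨q, ⟨hq, hpq, haq⟩, hmax⟩ := set_has_maximal_iff_noetherian.2 ‹_›
    {q : Ideal R | q.IsPrime ∧ p ≤ q ∧ a ∉ q} ⟨p, ‹_›, le_rfl, ha⟩
  refine ⟨q, hq, hpq, haq, krullDimLE_one_of_forall_isPrime_mem (a := Ideal.Quotient.mk q a)
    (by rwa [Ne, Ideal.Quotient.eq_zero_iff_mem]) fun r hr hr0 ↦ ?_⟩
  have hlt : q < r.comap (Ideal.Quotient.mk q) := by
    refine ((Ideal.mk_ker (I := q)).symm.trans_le (Ideal.ker_le_comap _)).lt_of_ne fun h ↦ hr0 ?_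
    rw [← Ideal.map_comap_of_surjective _ Ideal.Quotient.mk_surjective r, ← h,
      Ideal.map_quotient_self]
  by_contra har
  exact hmax _ ⟨hr.comap _, hpq.trans hlt.le, har⟩ hlt

end Primes

section Arcs

open IsLocalRing Polynomial

variable {k R : Type*} [Field k] [IsAlgClosed k] [CommRing R] [IsNoetherianRing R] [Algebra k R]
  {p : Ideal R} [p.IsPrime] {a : R}

theorem exists_isLocalHom_algHom_powerSeries_of_notMem [IsLocalRing R]
    (hR : Function.Surjective (algebraMap k (ResidueField R))) (ha : a ∉ p) :
    ∃ ρ : R →ₐ[k] PowerSeries k, IsLocalHom ρ ∧ p ≤ RingHom.ker ρ ∧ ρ a ≠ 0 := by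
  obtain ⟨q, hq, hpq, haq, hdim⟩ := exists_isPrime_krullDimLE_one_quotient ha
  have : IsLocalRing (R ⧸ q) := .of_surjective' _ Ideal.Quotient.mk_surjective
  have : IsLocalHom (algebraMap R (R ⧸ q)) := .of_surjective _ Ideal.Quotient.mk_surjective
  have : Algebra.IsIntegral R (ResidueField (R ⧸ q)) :=
    Algebra.isIntegral_of_surjective (residue_surjective.comp Ideal.Quotient.mk_surjective)
  obtain ⟨ρ, hρ, hρloc⟩ := exists_injective_algHom_powerSeries_of_krullDimLE_one
    (surjective_algebraMap_residueField_of_isIntegral (V := R ⧸ q) hR)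
  have hker {x : R} : ρ (Ideal.Quotient.mkₐ k q x) = 0 ↔ x ∈ q := by
    rw [map_eq_zero_iff ρ hρ, Ideal.Quotient.mkₐ_eq_mk, Ideal.Quotient.eq_zero_iff_mem]
  exact ⟨ρ.comp (Ideal.Quotient.mkₐ k q),
    ⟨fun x hx ↦ .of_map (algebraMap R (R ⧸ q)) x (.of_map ρ _ hx)⟩,
    fun x hx ↦ hker.2 (hpq hx), fun h ↦ haq (hker.1 h)⟩

theorem exists_algHom_powerSeries_of_notMem {J : Ideal R} [J.IsMaximal]
    (hJ : Function.Surjective (algebraMap k (R ⧸ J))) (hpJ : p ≤ J) (ha : a ∉ p) :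
    ∃ ρ : R →ₐ[k] PowerSeries k,
      (∀ x ∈ J, PowerSeries.X ∣ ρ x) ∧ p ≤ RingHom.ker ρ ∧ ρ a ≠ 0 := by
  let S := Localization.AtPrime J
  have hdisj : Disjoint (J.primeCompl : Set R) p := Set.disjoint_compl_left_iff_subset.2 hpJ
  have := IsLocalization.isPrime_of_isPrime_disjoint J.primeCompl S p ‹_› hdisj
  have hcomap := IsLocalization.under_map_of_isPrime_disjoint J.primeCompl S ‹p.IsPrime› hdisj
  have hS : Function.Surjective (algebraMap k (ResidueField S)) := by
    have := (Ideal.bijective_algebraMap_quotient_residueField J).2.comp hJ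
    rwa [← RingHom.coe_comp, ← IsScalarTower.algebraMap_eq] at this
  have haS : algebraMap R S a ∉ p.map (algebraMap R S) := fun h ↦ ha (hcomap.le h)
  obtain ⟨ρ, hρ, hpρ, hρa⟩ := exists_isLocalHom_algHom_powerSeries_of_notMem hS haS
  refine ⟨ρ.comp (IsScalarTower.toAlgHom k R S), fun x hx ↦ ?_,
    fun x hx ↦ hpρ (Ideal.mem_map_of_mem _ hx), hρa⟩
  rw [PowerSeries.X_dvd_iff]
  by_contra h
  have hunit : IsUnit (ρ (algebraMap R S x)) :=
    PowerSeries.isUnit_iff_constantCoeff.2 (IsUnit.mk0 _ h)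
  exact (IsLocalization.AtPrime.isUnit_to_map_iff S J x).1 (.of_map ρ _ hunit) hx

theorem ne_zero_of_aeval_eq_zero_of_isUnit_coeff_zero {A K : Type*} [CommRing A] [CommRing K]
    [Nontrivial K] [Algebra A K] {t : K} {f : A[X]} (hf : aeval t f = 0)
    (hf0 : IsUnit (f.coeff 0)) : t ≠ 0 := by
  rintro rfl
  rw [← coeff_zero_eq_aeval_zero'] at hf
  exact (hf0.map (algebraMap A K)).ne_zero hf

theorem isIntegral_inv_of_aeval_eq_zero_of_isUnit_coeff_zero {A K : Type*} [CommRing A] [Field K]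
    [Algebra A K] {t : K} {f : A[X]} (hf : aeval t f = 0) (hf0 : IsUnit (f.coeff 0)) :
    IsIntegral A t⁻¹ := by
  let := invertibleOfNonzero (ne_zero_of_aeval_eq_zero_of_isUnit_coeff_zero hf hf0)
  obtain ⟨u, hu⟩ := hf0
  have : Nontrivial A := (algebraMap A K).domain_nontrivial
  have hf0 : f.coeff 0 ≠ 0 := hu ▸ u.ne_zero
  have hlead : f.reverse.leadingCoeff = u := by
    rw [reverse_leadingCoeff, trailingCoeff_eq_coeff_zero hf0, hu]
  refine ⟨C (u⁻¹ : Aˣ).val * f.reverse, monic_C_mul_of_mul_leadingCoeff_eq_one ?_, ?_⟩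
  · rw [hlead, Units.inv_mul]
  · rw [eval₂_mul, ← invOf_eq_inv, (eval₂_reverse_eq_zero_iff (algebraMap A K) t f).2 hf, mul_zero]

theorem surjective_algebraMap_quotient_comap_constantCoeff {k A : Type*} [CommSemiring k]
    [CommRing A] [Algebra k A] {I : Ideal A} (hI : ∀ x : A, ∃ c : k, x - algebraMap k A c ∈ I) :
    Function.Surjective (algebraMap k (A[X] ⧸ I.comap Polynomial.constantCoeff)) := by
  intro x
  obtain ⟨f, rfl⟩ := Ideal.Quotient.mk_surjective x
  obtain ⟨c, hc⟩ := hI (f.coeff 0)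
  refine ⟨c, (Ideal.Quotient.eq.2 ?_).symm⟩
  simpa [Polynomial.algebraMap_apply] using hc

theorem exists_local_hom_powerSeries_general {k A K : Type*} [Field k] [IsAlgClosed k]
    [CommRing A] [IsNoetherianRing A] [IsLocalRing A] [Algebra k A] [Field K] [Algebra A K]
    (hres : ∀ x : A, ∃ c : k, x - algebraMap k A c ∈ maximalIdeal A) (a b : A)
    (hab : ∀ y : K, IsIntegral A y → algebraMap A K b * y ≠ algebraMap A K a) :
    ∃ ρ : A →ₐ[k] PowerSeries k,
      (∀ x ∈ maximalIdeal A, ρ x ∈ Ideal.span {(PowerSeries.X : PowerSeries k)}) ∧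
      ρ a ∉ Ideal.span {ρ b} := by
  have ha : algebraMap A K a ≠ 0 := fun h ↦ hab 0 isIntegral_zero (by rw [h, mul_zero])
  let t := algebraMap A K b / algebraMap A K a
  let p := RingHom.ker (aeval (R := A) t)
  let J : Ideal A[X] := (maximalIdeal A).comap Polynomial.constantCoeff
  have : J.IsMaximal := Ideal.comap_isMaximal_of_surjective _ constantCoeff_surjective
  have hpJ : p ≤ J := by
    intro f (hf : aeval t f = 0)
    refine (mem_maximalIdeal _).2 fun hf0 ↦ ?_
    refine hab t⁻¹ (isIntegral_inv_of_aeval_eq_zero_of_isUnit_coeff_zero hf hf0) ?_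
    have hb : algebraMap A K b ≠ 0 := fun h ↦
      ne_zero_of_aeval_eq_zero_of_isUnit_coeff_zero hf hf0 (by simp [t, h])
    rw [inv_div, mul_div_cancel₀ _ hb]
  have := RingHom.ker_isPrime (aeval (R := A) t)
  obtain ⟨ρ, hρJ, hρp, hρa⟩ := exists_algHom_powerSeries_of_notMem (p := p) (a := C a)
    (surjective_algebraMap_quotient_comap_constantCoeff hres) hpJ (by simpa [p])
  have hρb : ρ (C a) * ρ X = ρ (C b) := by
    rw [← map_mul, ← sub_eq_zero, ← map_sub]
    refine hρp ?_
    simp [p, t, mul_div_cancel₀ _ ha]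
  refine ⟨ρ.comp CAlgHom, fun x hx ↦ Ideal.mem_span_singleton.2 (hρJ _ (by simpa [J])), fun h ↦ ?_⟩
  obtain ⟨c, hc⟩ := Ideal.mem_span_singleton.1 h
  change ρ (C a) = ρ (C b) * c at hc
  rw [← hρb, mul_assoc, left_eq_mul₀ hρa] at hc
  exact PowerSeries.X_prime.not_isUnit (isUnit_of_dvd_one ((hρJ X (by simp)).trans ⟨c, hc.symm⟩))

end Arcs

/-- Lemma 5.3, after Böger: let `k` be an algebraically closed field and
`(A,m)` a Noetherian local domain, essentially of finite type over `k` with residue field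
`k`, which is integrally closed in its fraction field.  If `a ∉ bA`, then there is a local
`k`-algebra homomorphism `ρ : A → k[[z]]` with `ρ(a) ∉ ρ(b)·k[[z]]`. -/
theorem exists_local_hom_powerSeries {k A : Type*} [Field k] [IsAlgClosed k]
    [CommRing A] [IsDomain A] [IsNoetherianRing A] [IsLocalRing A]
    [Algebra k A] [Algebra.EssFiniteType k A] [IsIntegrallyClosed A]
    (hres : ∀ x : A, ∃ c : k, x - algebraMap k A c ∈ IsLocalRing.maximalIdeal A)
    (a b : A) (hab : a ∉ Ideal.span {b}) :
    ∃ ρ : A →ₐ[k] PowerSeries k,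
      (∀ x ∈ IsLocalRing.maximalIdeal A, ρ x ∈ Ideal.span {(PowerSeries.X : PowerSeries k)}) ∧
      ρ a ∉ Ideal.span {ρ b} := by
  refine exists_local_hom_powerSeries_general (K := FractionRing A) hres a b fun y hy hby ↦ hab ?_
  obtain ⟨r, rfl⟩ := IsIntegrallyClosed.isIntegral_iff.1 hy
  rw [← map_mul] at hby
  exact Ideal.mem_span_singleton.2 ⟨r, (IsFractionRing.injective A (FractionRing A) hby).symm⟩
end

section
/- Let k be an algebraically closed field of characteristic 0, let (A,m,k) be the local ring of an algebraic variety over k, let I be an m-primary ideal of A, and let h ∈ A. Set B = A ⊗_k A. Then h belongs to the weak subintegral closure *I of I if and only if for every k-algebra homomorphism ρ : B → k[[z]] satisfying ρ(a ⊗ 1) ∈ (z) and ρ(1 ⊗ a) ∈ (z) for all a ∈ m, the vector (ρ(h ⊗ 1), ρ(1 ⊗ h)) ∈ k[[z]]^2 lies in M_ρ + z·N_ρ, where M_ρ is the k[[z]]-submodule of k[[z]]^2 generated by {(ρ(g ⊗ 1), ρ(1 ⊗ g)) : g ∈ I} and N_ρ is the k[[z]]-submodule of k[[z]]^2 generated by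 {(ρ(g ⊗ 1), 0) : g ∈ I} ∪ {(0, ρ(1 ⊗ g)) : g ∈ I}. -/
open TensorProduct

/-- An element `b` is weakly subintegral over an ideal `I`:
there are `q ≥ 0` and `a_i ∈ I^i` with
`b^n + ∑_{i=1}^n (n choose i) a_i b^{n-i} = 0` for `q+1 ≤ n ≤ 2q+1`.
The set of such elements is the weak subintegral closure `*I`. -/
def WSubIdeal {A : Type*} [CommRing A] (I : Ideal A) (b : A) : Prop :=
  ∃ q : ℕ, ∃ a : ℕ → A, (∀ i, a i ∈ I ^ i) ∧
    ∀ n, q + 1 ≤ n → n ≤ 2 * q + 1 →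
      b ^ n + ∑ i ∈ Finset.Icc 1 n, (n.choose i : A) * a i * b ^ (n - i) = 0

/-!
Homomorphisms `ρ` as in the statement are pairs of arcs in `Spec A` based at the closed point.

Along such a pair, `M + z N` consists of the vectors of the product of the two extended ideals that
satisfy every congruence `y₁(0) = y₂(0)`, where `yᵢ` is the `i`-th entry divided by some `pᵢ`, which
holds on `M`. If `h ∈ *I`, the divided equations exhibit `y₁(0)` and `y₂(0)` as common roots of the
same polynomials `Fₙ`, of degrees `q + 1, …, 2 q + 1`. Since `Fₙ' = n Fₙ₋₁`, a common root is a root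
of multiplicity at least `q + 1` of the polynomial of degree `2 q + 1`, so there is only one.

Conversely, put `S = A[It]` and `B = A[It, ht]`, and lift points of `Spec B` over the closed point
of `A` to arcs by curve selection. The criterion on single arcs says that `ht` vanishes where all
`gt`, `g ∈ I`, do, so that `B` is finite over `S`; on pairs of arcs it says that two points over the
same point of `S` have the same value of `ht`. By the Nullstellensatz, `b = ht` then has
`b ⊗ 1 - 1 ⊗ b` nilpotent in `B ⊗[S] B`. If `K` is the kernel of `S[X] → B`, it follows that some
`S`-linear functional on `S[X]` vanishes on a power of `K` and takes the value `1` at `1`: with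
values in `B`-modules such functionals are found by division by powers of `X - b`, and a dévissage
transports them to `S`. The functional, extended `B`-linearly, kills `(X - b) ^ n` for all large
`n`; expanding this gives equations with binomial coefficients for `b`, and their homogeneous
components are the equations required of `h`.
-/

section AppellPolynomials

open Polynomial

/-- The `n`-th Appell polynomial `∑ i ≤ n, (n choose i) a_i X ^ (n - i)` of a sequence `a`. The
equations defining weak subintegrality say that `b` is a root of those of degree `q + 1` up to
`2 * q + 1`, with the convention `a 0 = 1`. -/
noncomputable def appellPoly {R : Type*} [CommRing R] (a : ℕ → R) (n : ℕ) : R[X] :=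
  ∑ i ∈ Finset.range (n + 1), C (n.choose i * a i) * X ^ (n - i)

/-- `x` is a common root of the Appell polynomials of `a` of degrees `q + 1, …, 2 * q + 1`. -/
def IsAppellRoot {R : Type*} [CommRing R] (a : ℕ → R) (q : ℕ) (x : R) : Prop :=
  ∀ n, q + 1 ≤ n → n ≤ 2 * q + 1 → (appellPoly a n).IsRoot x

variable {R : Type*} [CommRing R]

lemma eval_appellPoly (a : ℕ → R) (n : ℕ) (x : R) :
    (appellPoly a n).eval x =
      ∑ i ∈ Finset.range (n + 1), (n.choose i : R) * a i * x ^ (n - i) := by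
  simp [appellPoly, eval_finsetSum]

lemma map_appellPoly {S : Type*} [CommRing S] (f : R →+* S) (a : ℕ → R) (n : ℕ) :
    (appellPoly a n).map f = appellPoly (fun i => f (a i)) n := by
  simp [appellPoly, Polynomial.map_sum]

lemma natDegree_appellPoly_le (a : ℕ → R) (n : ℕ) : (appellPoly a n).natDegree ≤ n :=
  natDegree_sum_le_of_forall_le _ _ fun i _ =>
    (natDegree_C_mul_X_pow_le _ _).trans (Nat.sub_le n i)

lemma monic_appellPoly {a : ℕ → R} (ha : a 0 = 1) (n : ℕ) : (appellPoly a n).Monic := by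
  refine monic_of_natDegree_le_of_coeff_eq_one n (natDegree_appellPoly_le a n) ?_
  rw [appellPoly, finsetSum_coeff, Finset.sum_eq_single_of_mem 0 (by simp) fun i _ hi0 => ?_]
  · simp [ha]
  · rw [coeff_C_mul_X_pow, if_neg (by grind)]

lemma derivative_appellPoly_succ (a : ℕ → R) (n : ℕ) :
    derivative (appellPoly a (n + 1)) = C ((n + 1 : ℕ) : R) * appellPoly a n := by
  rw [appellPoly, Finset.sum_range_succ, derivative_add, derivative_sum, appellPoly,
    Finset.mul_sum, Nat.sub_self, pow_zero, mul_one, derivative_C, add_zero]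
  refine Finset.sum_congr rfl fun i _ => ?_
  have hsub : n + 1 - i - 1 = n - i := by omega
  have hchoose : (n.choose i : R) * (n + 1 : ℕ) = (n + 1).choose i * (n + 1 - i : ℕ) := by
    rw [← Nat.cast_mul, Nat.choose_mul_succ_eq, Nat.cast_mul]
  rw [derivative_C_mul_X_pow, hsub, ← mul_assoc, ← C_mul]
  congr 2
  linear_combination -a i * hchoose

lemma iterate_derivative_appellPoly (a : ℕ → R) {j n : ℕ} (hj : j ≤ n) :
    derivative^[j] (appellPoly a n) = C (n.descFactorial j : R) * appellPoly a (n - j) := by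
  induction j with
  | zero => simp
  | succ j ih =>
    obtain ⟨m, hm⟩ : ∃ m, n - j = m + 1 := ⟨n - j - 1, by omega⟩
    rw [Function.iterate_succ_apply', ih (by omega), derivative_C_mul, hm,
      derivative_appellPoly_succ, Nat.descFactorial_succ, hm, show n - (j + 1) = m by omega,
      ← mul_assoc, ← C_mul, Nat.cast_mul, mul_comm ((m + 1 : ℕ) : R)]

lemma eval_mul_appellPoly (p e : R) (a : ℕ → R) (n : ℕ) :
    (appellPoly (fun i => p ^ i * a i) n).eval (p * e) = p ^ n * (appellPoly a n).eval e := by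
  rw [eval_appellPoly, eval_appellPoly, Finset.mul_sum]
  refine Finset.sum_congr rfl fun i hi => ?_
  rw [← pow_mul_pow_sub p (Finset.mem_range_succ_iff.mp hi)]
  ring

namespace IsAppellRoot

variable {a : ℕ → R} {q : ℕ} {x : R}

lemma map {S : Type*} [CommRing S] (hx : IsAppellRoot a q x) (f : R →+* S) :
    IsAppellRoot (fun i => f (a i)) q (f x) := fun n h₁ h₂ => by
  rw [← map_appellPoly]
  exact (hx n h₁ h₂).map

variable [IsDomain R]

lemma of_mul {p : R} (hp : p ≠ 0) (hx : IsAppellRoot (fun i => p ^ i * a i) q (p * x)) :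
    IsAppellRoot a q x := fun n h₁ h₂ =>
  (mul_eq_zero.mp ((eval_mul_appellPoly p x a n).symm.trans (hx n h₁ h₂))).resolve_left
    (pow_ne_zero n hp)

lemma dvd [IsIntegrallyClosed R] {p : R} (ha : a 0 = 1)
    (hx : IsAppellRoot (fun i => p ^ i * a i) q x) : p ∣ x := by
  rcases eq_or_ne p 0 with rfl | hp
  · have hpow : x ^ (q + 1) = 0 := by
      have h := hx (q + 1) le_rfl (by omega)
      rwa [IsRoot, eval_appellPoly, Finset.sum_eq_single_of_mem 0 (by simp)
        fun i _ hi => by simp [hi], pow_zero, one_mul, ha, Nat.choose_zero_right, Nat.cast_one,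
        one_mul, one_mul, Nat.sub_zero] at h
    exact zero_dvd_iff.mpr ((pow_eq_zero_iff q.succ_ne_zero).mp hpow)
  let F := FractionRing R
  have hp' : algebraMap R F p ≠ 0 := by simpa using hp
  have hroot : IsAppellRoot (fun i => algebraMap R F (a i)) q
      (algebraMap R F x / algebraMap R F p) := by
    refine of_mul hp' ?_
    simpa [mul_div_cancel₀ _ hp'] using hx.map (algebraMap R F)
  have hint : IsIntegral R (algebraMap R F x / algebraMap R F p) := by
    refine ⟨_, monic_appellPoly ha (q + 1), ?_⟩
    rw [eval₂_eq_eval_map, map_appellPoly]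
    exact hroot _ le_rfl (by omega)
  obtain ⟨e, he⟩ := IsIntegrallyClosed.isIntegral_iff.mp hint
  exact ⟨e, IsFractionRing.injective R F (by rw [map_mul, he, mul_div_cancel₀ _ hp'])⟩

variable [CharZero R]

/-- The derivatives of the polynomial of degree `2 * q + 1` up to order `q` are multiples of the
lower ones, hence a common root has multiplicity at least `q + 1` in it. -/
lemma lt_rootMultiplicity (ha : a 0 = 1) (hx : IsAppellRoot a q x) :
    q < rootMultiplicity x (appellPoly a (2 * q + 1)) := by
  refine lt_rootMultiplicity_of_isRoot_iterate_derivative (monic_appellPoly ha _).ne_zero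
    fun j hj => ?_
  rw [iterate_derivative_appellPoly a (by omega)]
  exact root_mul_left_of_isRoot _ (hx _ (by omega) (by omega))

lemma eq {y : R} (ha : a 0 = 1) (hx : IsAppellRoot a q x) (hy : IsAppellRoot a q y) : x = y := by
  classical
  by_contra hxy
  set P := appellPoly a (2 * q + 1)
  have hle : Multiset.replicate (q + 1) x + Multiset.replicate (q + 1) y ≤ P.roots := by
    refine Multiset.le_iff_count.mpr fun z => ?_
    have hx' : q < rootMultiplicity x P := lt_rootMultiplicity ha hx
    have hy' : q < rootMultiplicity y P := lt_rootMultiplicity ha hy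
    rw [Multiset.count_add, Multiset.count_replicate, Multiset.count_replicate, count_roots]
    split_ifs with hzx hzy hzy
    · exact absurd (hzx.trans hzy.symm) hxy
    · subst hzx; omega
    · subst hzy; omega
    · exact Nat.zero_le _
  have hcard := ((Multiset.card_le_card hle).trans (card_roots' P)).trans
    (natDegree_appellPoly_le a _)
  rw [Multiset.card_add, Multiset.card_replicate, Multiset.card_replicate] at hcard
  omega

end IsAppellRoot

/-- The convention `a 0 = 1` absorbs the leading term `b ^ n` into the sum. -/
lemma wSubIdeal_iff_exists_isAppellRoot {I : Ideal R} {x : R} :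
    WSubIdeal I x ↔
      ∃ q, ∃ a : ℕ → R, a 0 = 1 ∧ (∀ i, a i ∈ I ^ i) ∧ IsAppellRoot a q x := by
  have heval (a : ℕ → R) (ha : a 0 = 1) (n : ℕ) : (appellPoly a n).eval x =
      x ^ n + ∑ i ∈ Finset.Icc 1 n, (n.choose i : R) * a i * x ^ (n - i) := by
    rw [eval_appellPoly, Finset.sum_range_eq_add_Ico _ n.succ_pos,
      ← Finset.Ico_add_one_right_eq_Icc]
    simp [ha]
  constructor
  · rintro ⟨q, a, ha, hx⟩
    refine ⟨q, Function.update a 0 1, by simp, fun i => ?_, fun n h₁ h₂ => ?_⟩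
    · rcases eq_or_ne i 0 with rfl | hi
      · simp
      · simpa [hi] using ha i
    · rw [IsRoot, heval _ (by simp), ← hx n h₁ h₂]
      congr 1
      refine Finset.sum_congr rfl fun i hi => ?_
      rw [Function.update_of_ne (by grind)]
  · rintro ⟨q, a, ha₀, ha, hx⟩
    exact ⟨q, a, ha, fun n h₁ h₂ => (heval a ha₀ n).symm.trans (hx n h₁ h₂)⟩

end AppellPolynomials

section RelativeModule

open PowerSeries

/-- The module `M + z N` of a pair of power series points `φ₁`, `φ₂`, where `M` is generated by the
vectors `(φ₁ g, φ₂ g)` and `N` by the vectors `(φ₁ g, 0)` and `(0, φ₂ g)`, for `g ∈ I`. -/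
noncomputable def relativeModule {k A F : Type*} [CommRing k] [CommRing A] [FunLike F A k⟦X⟧]
    (I : Ideal A) (φ₁ φ₂ : F) : Submodule k⟦X⟧ (k⟦X⟧ × k⟦X⟧) :=
  Submodule.span k⟦X⟧ {v | ∃ g ∈ I, v = (φ₁ g, φ₂ g)} +
    Ideal.span {(X : k⟦X⟧)} •
      Submodule.span k⟦X⟧ {v | ∃ g ∈ I, v = (φ₁ g, 0) ∨ v = (0, φ₂ g)}

/-- The module of the vectors `(p₁ * y₁, p₂ * y₂)` for which `y₁` and `y₂` have the same constant
coefficient. By `mem_relativeModule_iff`, the modules of this shape are the only linear conditions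
that cut out `relativeModule` inside the product of the extended ideals. -/
def congruenceModule {k : Type*} [CommRing k] (p₁ p₂ : k⟦X⟧) :
    Submodule k⟦X⟧ (k⟦X⟧ × k⟦X⟧) where
  carrier := {v | ∃ y₁ y₂, constantCoeff y₁ = constantCoeff y₂ ∧ v = (p₁ * y₁, p₂ * y₂)}
  zero_mem' := ⟨0, 0, rfl, by simp only [mul_zero]; rfl⟩
  add_mem' := by
    rintro _ _ ⟨y₁, y₂, hy, rfl⟩ ⟨z₁, z₂, hz, rfl⟩
    exact ⟨y₁ + z₁, y₂ + z₂, by simp [hy, hz], by simp [mul_add]⟩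
  smul_mem' := by
    rintro r _ ⟨y₁, y₂, hy, rfl⟩
    exact ⟨r * y₁, r * y₂, by simp [hy], by simp [mul_left_comm]⟩

/-- The `k`-subspace of the vectors of constant coefficients of those `(y₁, y₂)` for which
`(p₁ * y₁, p₂ * y₂)` lies in `M`. -/
def leadingCoeffs {k : Type*} [CommRing k] (M : Submodule k⟦X⟧ (k⟦X⟧ × k⟦X⟧)) (p₁ p₂ : k⟦X⟧) :
    Submodule k (k × k) where
  carrier := {c | ∃ y₁ y₂, (p₁ * y₁, p₂ * y₂) ∈ M ∧ c = (constantCoeff y₁, constantCoeff y₂)}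
  zero_mem' := ⟨0, 0, by simp only [mul_zero]; exact M.zero_mem, by simp only [map_zero]; rfl⟩
  add_mem' := by
    rintro _ _ ⟨y₁, y₂, hy, rfl⟩ ⟨z₁, z₂, hz, rfl⟩
    exact ⟨y₁ + z₁, y₂ + z₂, by simpa [mul_add] using M.add_mem hy hz, by simp⟩
  smul_mem' := by
    rintro r _ ⟨y₁, y₂, hy, rfl⟩
    exact ⟨C r * y₁, C r * y₂, by simpa [mul_left_comm] using M.smul_mem (C r) hy, by simp⟩

section CommRing

variable {k A F : Type*} [CommRing k] [CommRing A] [FunLike F A k⟦X⟧] {I : Ideal A} {φ₁ φ₂ : F}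

lemma mul_mem_congruenceModule {p₁ p₂ q₁ q₂ : k⟦X⟧} {v w : k⟦X⟧ × k⟦X⟧}
    (hv : v ∈ congruenceModule p₁ p₂) (hw : w ∈ congruenceModule q₁ q₂) :
    v * w ∈ congruenceModule (p₁ * q₁) (p₂ * q₂) := by
  obtain ⟨y₁, y₂, hy, rfl⟩ := hv
  obtain ⟨z₁, z₂, hz, rfl⟩ := hw
  exact ⟨y₁ * z₁, y₂ * z₂, by simp [hy, hz], by simp [mul_mul_mul_comm]⟩

lemma span_inl_inr_eq_prod_map :
    Submodule.span k⟦X⟧ {v : k⟦X⟧ × k⟦X⟧ | ∃ g ∈ I, v = (φ₁ g, 0) ∨ v = (0, φ₂ g)} =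
      Submodule.prod (I.map φ₁) (I.map φ₂) := by
  refine le_antisymm (Submodule.span_le.mpr ?_) fun v hv => ?_
  · rintro _ ⟨g, hg, rfl | rfl⟩
    · exact ⟨Ideal.mem_map_of_mem φ₁ hg, zero_mem _⟩
    · exact ⟨zero_mem _, Ideal.mem_map_of_mem φ₂ hg⟩
  set N := Submodule.span k⟦X⟧ {v : k⟦X⟧ × k⟦X⟧ | ∃ g ∈ I, v = (φ₁ g, 0) ∨ v = (0, φ₂ g)}
  have hinl : I.map φ₁ ≤ N.comap (LinearMap.inl k⟦X⟧ k⟦X⟧ k⟦X⟧) := by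
    refine Submodule.span_le.mpr ?_
    rintro _ ⟨g, hg, rfl⟩
    exact Submodule.subset_span ⟨g, hg, Or.inl rfl⟩
  have hinr : I.map φ₂ ≤ N.comap (LinearMap.inr k⟦X⟧ k⟦X⟧ k⟦X⟧) := by
    refine Submodule.span_le.mpr ?_
    rintro _ ⟨g, hg, rfl⟩
    exact Submodule.subset_span ⟨g, hg, Or.inr rfl⟩
  simpa using N.add_mem (hinl hv.1) (hinr hv.2)

lemma mk_mem_relativeModule {g : A} (hg : g ∈ I) : (φ₁ g, φ₂ g) ∈ relativeModule I φ₁ φ₂ :=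
  Submodule.mem_sup_left (Submodule.subset_span ⟨g, hg, rfl⟩)

lemma X_smul_mem_relativeModule {v : k⟦X⟧ × k⟦X⟧}
    (hv : v ∈ Submodule.prod (I.map φ₁) (I.map φ₂)) :
    (X : k⟦X⟧) • v ∈ relativeModule I φ₁ φ₂ := by
  rw [← span_inl_inr_eq_prod_map] at hv
  exact Submodule.mem_sup_right (Submodule.smul_mem_smul (Ideal.mem_span_singleton_self X) hv)

lemma relativeModule_le {P : Submodule k⟦X⟧ (k⟦X⟧ × k⟦X⟧)}
    (hI : ∀ g ∈ I, (φ₁ g, φ₂ g) ∈ P)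
    (hX : ∀ v ∈ Submodule.prod (I.map φ₁) (I.map φ₂), (X : k⟦X⟧) • v ∈ P) :
    relativeModule I φ₁ φ₂ ≤ P := by
  refine sup_le (Submodule.span_le.mpr ?_) (Submodule.smul_le.mpr fun r hr v hv => ?_)
  · rintro _ ⟨g, hg, rfl⟩
    exact hI g hg
  · obtain ⟨s, rfl⟩ := Ideal.mem_span_singleton'.mp hr
    rw [mul_smul]
    exact P.smul_mem s (hX v (span_inl_inr_eq_prod_map.le hv))

lemma relativeModule_le_prod :
    relativeModule I φ₁ φ₂ ≤ Submodule.prod (I.map φ₁) (I.map φ₂) :=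
  relativeModule_le (fun _ hg => ⟨Ideal.mem_map_of_mem φ₁ hg, Ideal.mem_map_of_mem φ₂ hg⟩)
    fun _ hv => Submodule.smul_mem _ X hv

lemma swap_mem_relativeModule {v : k⟦X⟧ × k⟦X⟧} (hv : v ∈ relativeModule I φ₁ φ₂) :
    v.swap ∈ relativeModule I φ₂ φ₁ := by
  have hle : relativeModule I φ₁ φ₂ ≤
      (relativeModule I φ₂ φ₁).comap (LinearEquiv.prodComm k⟦X⟧ k⟦X⟧ k⟦X⟧).toLinearMap :=
    relativeModule_le (fun g hg => mk_mem_relativeModule hg)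
      fun v hv => X_smul_mem_relativeModule (v := v.swap) hv.symm
  exact hle hv

lemma map_le_span_of_mk_mem_congruenceModule {p₁ p₂ : k⟦X⟧}
    (hI : ∀ g ∈ I, (φ₁ g, φ₂ g) ∈ congruenceModule p₁ p₂) :
    I.map φ₁ ≤ Ideal.span {p₁} ∧ I.map φ₂ ≤ Ideal.span {p₂} := by
  constructor <;> refine Submodule.span_le.mpr ?_ <;> rintro _ ⟨g, hg, rfl⟩ <;>
    obtain ⟨y₁, y₂, -, hy⟩ := hI g hg
  · exact Ideal.mem_span_singleton.mpr ⟨y₁, congrArg Prod.fst hy⟩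
  · exact Ideal.mem_span_singleton.mpr ⟨y₂, congrArg Prod.snd hy⟩

lemma relativeModule_le_congruenceModule {p₁ p₂ : k⟦X⟧}
    (hI : ∀ g ∈ I, (φ₁ g, φ₂ g) ∈ congruenceModule p₁ p₂) :
    relativeModule I φ₁ φ₂ ≤ congruenceModule p₁ p₂ := by
  obtain ⟨h₁, h₂⟩ := map_le_span_of_mk_mem_congruenceModule hI
  refine relativeModule_le hI ?_
  rintro ⟨v₁, v₂⟩ ⟨hv₁, hv₂⟩
  obtain ⟨y₁, rfl⟩ := Ideal.mem_span_singleton.mp (h₁ hv₁)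
  obtain ⟨y₂, rfl⟩ := Ideal.mem_span_singleton.mp (h₂ hv₂)
  exact ⟨X * y₁, X * y₂, by simp, by simp [mul_left_comm]⟩

lemma mem_relativeModule_of_mem_leadingCoeffs {p₁ p₂ e₁ e₂ : k⟦X⟧}
    (hp₁ : p₁ ∈ I.map φ₁) (hp₂ : p₂ ∈ I.map φ₂)
    (he : (constantCoeff e₁, constantCoeff e₂) ∈ leadingCoeffs (relativeModule I φ₁ φ₂) p₁ p₂) :
    (p₁ * e₁, p₂ * e₂) ∈ relativeModule I φ₁ φ₂ := by
  obtain ⟨y₁, y₂, hy, he⟩ := he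
  obtain ⟨h₁, h₂⟩ := Prod.mk.inj he
  obtain ⟨w₁, hw₁⟩ : X ∣ e₁ - y₁ := X_dvd_iff.mpr (by rw [map_sub, h₁, sub_self])
  obtain ⟨w₂, hw₂⟩ : X ∣ e₂ - y₂ := X_dvd_iff.mpr (by rw [map_sub, h₂, sub_self])
  have hz : (X : k⟦X⟧) • (p₁ * w₁, p₂ * w₂) ∈ relativeModule I φ₁ φ₂ :=
    X_smul_mem_relativeModule ⟨Ideal.mul_mem_right _ _ hp₁, Ideal.mul_mem_right _ _ hp₂⟩
  convert Submodule.add_mem _ hy hz using 1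
  ext1
  · simp only [Prod.fst_add, Prod.smul_fst, smul_eq_mul]
    linear_combination p₁ * hw₁
  · simp only [Prod.snd_add, Prod.smul_snd, smul_eq_mul]
    linear_combination p₂ * hw₂

lemma exists_mk_one_mem_leadingCoeffs {p₁ p₂ : k⟦X⟧} (h₁ : p₁ ∈ I.map φ₁)
    (h₂ : I.map φ₂ ≤ Ideal.span {p₂}) :
    ∃ c, ((1 : k), c) ∈ leadingCoeffs (relativeModule I φ₁ φ₂) p₁ p₂ := by
  have hle : I.map φ₁ ≤ (relativeModule I φ₁ φ₂).map (LinearMap.fst k⟦X⟧ k⟦X⟧ k⟦X⟧) := by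
    refine Submodule.span_le.mpr ?_
    rintro _ ⟨g, hg, rfl⟩
    exact ⟨_, mk_mem_relativeModule hg, rfl⟩
  obtain ⟨⟨_, w⟩, hw, rfl⟩ := hle h₁
  obtain ⟨y, rfl⟩ := Ideal.mem_span_singleton.mp (h₂ (relativeModule_le_prod hw).2)
  exact ⟨constantCoeff y, 1, y, by simpa using hw, by simp⟩

lemma swap_mem_leadingCoeffs {p₁ p₂ : k⟦X⟧} {c : k × k}
    (hc : c ∈ leadingCoeffs (relativeModule I φ₁ φ₂) p₁ p₂) :
    c.swap ∈ leadingCoeffs (relativeModule I φ₂ φ₁) p₂ p₁ := by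
  obtain ⟨y₁, y₂, hy, rfl⟩ := hc
  exact ⟨y₂, y₁, swap_mem_relativeModule hy, rfl⟩

end CommRing

section Field

variable {k A F : Type*} [Field k] [CommRing A] [FunLike F A k⟦X⟧] {I : Ideal A} {φ₁ φ₂ : F}

lemma mk_mem_congruenceModule_iff {p₁ p₂ y₁ y₂ : k⟦X⟧} {a b : k} (hp₁ : p₁ ≠ 0) (hp₂ : p₂ ≠ 0)
    (ha : a ≠ 0) (hb : b ≠ 0) :
    (p₁ * y₁, p₂ * y₂) ∈ congruenceModule (p₁ * C a) (p₂ * C b) ↔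
      b * constantCoeff y₁ = a * constantCoeff y₂ := by
  constructor
  · rintro ⟨z₁, z₂, hz, hy⟩
    obtain ⟨h₁, h₂⟩ := Prod.mk.inj hy
    rw [mul_assoc] at h₁ h₂
    rw [mul_left_cancel₀ hp₁ h₁, mul_left_cancel₀ hp₂ h₂]
    simp [hz, mul_left_comm]
  · intro h
    refine ⟨C a⁻¹ * y₁, C b⁻¹ * y₂, ?_, Prod.ext ?_ ?_⟩
    · simp only [map_mul, constantCoeff_C]
      field_simp
      linear_combination h
    · simp [← mul_assoc, mul_assoc p₁, ← map_mul, ha]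
    · simp [← mul_assoc, mul_assoc p₂, ← map_mul, hb]

/-- A functional `(x, y) ↦ α * x + β * y` that vanishes on the leading coefficients becomes a
congruence after rescaling the generators `p₁` and `p₂` by `β` and `-α`. -/
lemma mem_leadingCoeffs_of_forall_mem_congruenceModule {p₁ p₂ e₁ e₂ : k⟦X⟧}
    (hp₁ : p₁ ≠ 0) (hp₂ : p₂ ≠ 0)
    (h₁ : I.map φ₁ = Ideal.span {p₁}) (h₂ : I.map φ₂ = Ideal.span {p₂})
    (he : ∀ q₁ q₂ : k⟦X⟧, q₁ ≠ 0 → q₂ ≠ 0 →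
      (∀ g ∈ I, (φ₁ g, φ₂ g) ∈ congruenceModule q₁ q₂) →
        (p₁ * e₁, p₂ * e₂) ∈ congruenceModule q₁ q₂) :
    (constantCoeff e₁, constantCoeff e₂) ∈ leadingCoeffs (relativeModule I φ₁ φ₂) p₁ p₂ := by
  by_contra hne
  obtain ⟨f, hf, hle⟩ := Submodule.exists_le_ker_of_notMem hne
  obtain ⟨α, β, hf_apply⟩ : ∃ α β : k, ∀ x y, f (x, y) = α * x + β * y :=
    ⟨f (1, 0), f (0, 1), fun x y => by
      rw [mul_comm, mul_comm (f (0, 1)), ← smul_eq_mul, ← smul_eq_mul, ← map_smul, ← map_smul,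
        ← map_add]
      simp⟩
  obtain ⟨c, hc⟩ := exists_mk_one_mem_leadingCoeffs (φ₂ := φ₂)
    (h₁ ▸ Ideal.mem_span_singleton_self p₁) h₂.le
  obtain ⟨d, hd⟩ := exists_mk_one_mem_leadingCoeffs (φ₂ := φ₁)
    (h₂ ▸ Ideal.mem_span_singleton_self p₂) h₁.le
  have hfc : α * 1 + β * c = 0 := (hf_apply _ _).symm.trans (hle hc)
  have hfd : α * d + β * 1 = 0 := (hf_apply _ _).symm.trans (hle (swap_mem_leadingCoeffs hd))
  have hα : α ≠ 0 := by
    rintro rfl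
    have hβ : β = 0 := by simpa using hfd
    exact hf (by rw [hf_apply, hβ]; ring)
  have hβ : β ≠ 0 := by
    rintro rfl
    exact hα (by simpa using hfc)
  have hmem_iff (y₁ y₂ : k⟦X⟧) :
      (p₁ * y₁, p₂ * y₂) ∈ congruenceModule (p₁ * C β) (p₂ * C (-α)) ↔
        f (constantCoeff y₁, constantCoeff y₂) = 0 := by
    rw [mk_mem_congruenceModule_iff hp₁ hp₂ hβ (neg_ne_zero.mpr hα), hf_apply, ← sub_eq_zero,
      ← neg_eq_zero]
    ring_nf
  refine hf ((hmem_iff e₁ e₂).mp (he _ _ (mul_ne_zero hp₁ (by simpa using hβ))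
    (mul_ne_zero hp₂ (by simpa using hα)) fun g hg => ?_))
  obtain ⟨y₁, hy₁⟩ := Ideal.mem_span_singleton.mp (h₁ ▸ Ideal.mem_map_of_mem φ₁ hg)
  obtain ⟨y₂, hy₂⟩ := Ideal.mem_span_singleton.mp (h₂ ▸ Ideal.mem_map_of_mem φ₂ hg)
  have hg' : (φ₁ g, φ₂ g) ∈ relativeModule I φ₁ φ₂ := mk_mem_relativeModule hg
  rw [hy₁, hy₂] at hg' ⊢
  exact (hmem_iff y₁ y₂).mpr (hle ⟨y₁, y₂, hg', rfl⟩)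

lemma mem_relativeModule_of_map_eq_bot (h₁ : I.map φ₁ = ⊥) {v : k⟦X⟧ × k⟦X⟧}
    (hv : v ∈ Submodule.prod (I.map φ₁) (I.map φ₂)) : v ∈ relativeModule I φ₁ φ₂ := by
  have hle : I.map φ₂ ≤ (relativeModule I φ₁ φ₂).comap (LinearMap.inr k⟦X⟧ k⟦X⟧ k⟦X⟧) := by
    refine Submodule.span_le.mpr ?_
    rintro _ ⟨g, hg, rfl⟩
    have hφ₁ : φ₁ g = 0 := by simpa [h₁] using Ideal.mem_map_of_mem φ₁ hg
    simpa [hφ₁] using mk_mem_relativeModule (φ₁ := φ₁) (φ₂ := φ₂) hg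
  obtain ⟨v₁, v₂⟩ := v
  obtain ⟨hv₁, hv₂⟩ := hv
  obtain rfl : v₁ = 0 := by simpa [h₁] using hv₁
  exact hle hv₂

theorem mem_relativeModule_iff {v : k⟦X⟧ × k⟦X⟧} :
    v ∈ relativeModule I φ₁ φ₂ ↔
      v ∈ Submodule.prod (I.map φ₁) (I.map φ₂) ∧
        ∀ p₁ p₂ : k⟦X⟧, p₁ ≠ 0 → p₂ ≠ 0 →
          (∀ g ∈ I, (φ₁ g, φ₂ g) ∈ congruenceModule p₁ p₂) → v ∈ congruenceModule p₁ p₂ := by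
  refine ⟨fun hv => ⟨relativeModule_le_prod hv, fun p₁ p₂ _ _ hI =>
    relativeModule_le_congruenceModule hI hv⟩, fun ⟨hv, hcong⟩ => ?_⟩
  obtain ⟨p₁, h₁⟩ := IsPrincipalIdealRing.principal (I.map φ₁)
  obtain ⟨p₂, h₂⟩ := IsPrincipalIdealRing.principal (I.map φ₂)
  by_cases hp₁ : p₁ = 0
  · exact mem_relativeModule_of_map_eq_bot (by simp [h₁, hp₁]) hv
  by_cases hp₂ : p₂ = 0
  · exact swap_mem_relativeModule
      (mem_relativeModule_of_map_eq_bot (φ₂ := φ₁) (by simp [h₂, hp₂]) (v := v.swap) hv.symm)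
  have hmem₁ : p₁ ∈ I.map φ₁ := h₁ ▸ Ideal.mem_span_singleton_self p₁
  have hmem₂ : p₂ ∈ I.map φ₂ := h₂ ▸ Ideal.mem_span_singleton_self p₂
  obtain ⟨v₁, v₂⟩ := v
  obtain ⟨e₁, rfl⟩ := Ideal.mem_span_singleton.mp (h₁ ▸ hv.1)
  obtain ⟨e₂, rfl⟩ := Ideal.mem_span_singleton.mp (h₂ ▸ hv.2)
  exact mem_relativeModule_of_mem_leadingCoeffs hmem₁ hmem₂
    (mem_leadingCoeffs_of_forall_mem_congruenceModule hp₁ hp₂ h₁ h₂ hcong)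

end Field

section WeakSubintegral

variable {k A : Type*} [Field k] [CommRing A] {I : Ideal A} {h : A}

lemma dvd_of_wSubIdeal {V : Type*} [CommRing V] [IsDomain V] [IsIntegrallyClosed V]
    (hh : WSubIdeal I h) (φ : A →+* V) {p : V} (hI : I.map φ ≤ Ideal.span {p}) :
    p ∣ φ h := by
  obtain ⟨q, a, ha₀, ha, hroot⟩ := wSubIdeal_iff_exists_isAppellRoot.mp hh
  have hdvd (i : ℕ) : ∃ α, φ (a i) = p ^ i * α ∧ (i = 0 → α = 1) := by
    rcases i with _ | i
    · exact ⟨1, by simp [ha₀], fun _ => rfl⟩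
    have hmem : φ (a (i + 1)) ∈ Ideal.span {p ^ (i + 1)} := by
      rw [← Ideal.span_singleton_pow]
      refine Ideal.pow_right_mono hI _ ?_
      rw [← Ideal.map_pow]
      exact Ideal.mem_map_of_mem φ (ha _)
    obtain ⟨α, hα⟩ := Ideal.mem_span_singleton.mp hmem
    exact ⟨α, hα, by simp⟩
  choose α hα hα₀ using hdvd
  refine IsAppellRoot.dvd (q := q) (a := α) (hα₀ 0 rfl) ?_
  simpa only [← hα] using hroot.map φ

lemma mk_mem_congruenceModule_pow {φ₁ φ₂ : A →+* k⟦X⟧} {p₁ p₂ : k⟦X⟧}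
    (hI : ∀ g ∈ I, (φ₁ g, φ₂ g) ∈ congruenceModule p₁ p₂) (n : ℕ) :
    ∀ x ∈ I ^ (n + 1), (φ₁ x, φ₂ x) ∈ congruenceModule (p₁ ^ (n + 1)) (p₂ ^ (n + 1)) := by
  induction n with
  | zero => simpa using hI
  | succ n ih =>
    intro x hx
    rw [pow_succ] at hx
    induction hx using Submodule.mul_induction_on' with
    | mem_mul_mem x hx g hg =>
      rw [pow_succ p₁, pow_succ p₂, map_mul, map_mul]
      exact mul_mem_congruenceModule (ih x hx) (hI g hg)
    | add x _ y _ hx hy =>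
      rw [map_add, map_add]
      exact add_mem hx hy

/-- After division by powers of `p₁` and `p₂`, the two constant coefficients are common roots of the
same Appell polynomials. -/
lemma mk_mem_congruenceModule_of_wSubIdeal [CharZero k] (hh : WSubIdeal I h)
    {φ₁ φ₂ : A →+* k⟦X⟧} {p₁ p₂ : k⟦X⟧} (hp₁ : p₁ ≠ 0) (hp₂ : p₂ ≠ 0)
    (hI : ∀ g ∈ I, (φ₁ g, φ₂ g) ∈ congruenceModule p₁ p₂) :
    (φ₁ h, φ₂ h) ∈ congruenceModule p₁ p₂ := by
  obtain ⟨hI₁, hI₂⟩ := map_le_span_of_mk_mem_congruenceModule hI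
  obtain ⟨e₁, he₁⟩ := dvd_of_wSubIdeal hh φ₁ hI₁
  obtain ⟨e₂, he₂⟩ := dvd_of_wSubIdeal hh φ₂ hI₂
  obtain ⟨q, a, ha₀, ha, hroot⟩ := wSubIdeal_iff_exists_isAppellRoot.mp hh
  have hdiv (i : ℕ) : ∃ α₁ α₂ : k⟦X⟧, φ₁ (a i) = p₁ ^ i * α₁ ∧ φ₂ (a i) = p₂ ^ i * α₂ ∧
      constantCoeff α₁ = constantCoeff α₂ ∧ (i = 0 → constantCoeff α₁ = 1) := by
    rcases i with _ | i
    · exact ⟨1, 1, by simp [ha₀]⟩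
    obtain ⟨α₁, α₂, hα, h⟩ := mk_mem_congruenceModule_pow hI i _ (ha (i + 1))
    exact ⟨α₁, α₂, congrArg Prod.fst h, congrArg Prod.snd h, hα, by simp⟩
  choose α₁ α₂ hα₁ hα₂ hα hα₀ using hdiv
  have hroot₁ : IsAppellRoot α₁ q e₁ :=
    .of_mul hp₁ (by simpa only [← hα₁, ← he₁] using hroot.map φ₁)
  have hroot₂ : IsAppellRoot α₂ q e₂ :=
    .of_mul hp₂ (by simpa only [← hα₂, ← he₂] using hroot.map φ₂)
  refine ⟨e₁, e₂, ?_, Prod.ext he₁ he₂⟩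
  refine IsAppellRoot.eq (hα₀ 0 rfl) (hroot₁.map constantCoeff) ?_
  simpa only [hα] using hroot₂.map constantCoeff

theorem mk_mem_relativeModule_of_wSubIdeal [CharZero k] (hh : WSubIdeal I h)
    (φ₁ φ₂ : A →+* k⟦X⟧) : (φ₁ h, φ₂ h) ∈ relativeModule I φ₁ φ₂ := by
  have hmem (φ : A →+* k⟦X⟧) : φ h ∈ I.map φ := by
    obtain ⟨p, hp⟩ := IsPrincipalIdealRing.principal (I.map φ)
    rw [hp]
    exact Ideal.mem_span_singleton.mpr (dvd_of_wSubIdeal hh φ hp.le)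
  exact mem_relativeModule_iff.mpr ⟨⟨hmem φ₁, hmem φ₂⟩,
    fun _ _ hp₁ hp₂ => mk_mem_congruenceModule_of_wSubIdeal hh hp₁ hp₂⟩

end WeakSubintegral

end RelativeModule

section RationalPoints

variable {S B : Type*} [CommRing S] [CommRing B] [Algebra S B]

lemma nonempty_algHom_of_isIntegral [Algebra.IsIntegral S B] [FaithfulSMul S B] (Ω : Type*)
    [Field Ω] [IsAlgClosed Ω] [Algebra S Ω] : Nonempty (B →ₐ[S] Ω) := by
  let p := RingHom.ker (algebraMap S Ω)
  have hp : p.IsPrime := RingHom.ker_isPrime _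
  obtain ⟨q, hq, hqp⟩ := Ideal.nonempty_primesOver (S := B) p
  let : Algebra (S ⧸ p) Ω := (RingHom.kerLift (algebraMap S Ω)).toAlgebra
  have : FaithfulSMul (S ⧸ p) Ω :=
    (faithfulSMul_iff_algebraMap_injective _ _).mpr (RingHom.kerLift_injective _)
  have : IsScalarTower S (S ⧸ p) Ω := .of_algebraMap_eq fun _ => rfl
  have : Module.IsTorsionFree (S ⧸ p) (B ⧸ q) :=
    Module.isTorsionFree_iff_faithfulSMul.mpr (Ideal.Quotient.instFaithfulSMul q p)
  let φ : B ⧸ q →ₐ[S ⧸ p] Ω := IsAlgClosed.lift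
  exact ⟨(φ.restrictScalars S).comp (IsScalarTower.toAlgHom S B (B ⧸ q))⟩

lemma isNilpotent_algHom_sub {b : B} (hb : IsNilpotent (b ⊗ₜ[S] (1 : B) - 1 ⊗ₜ b)) {D : Type*}
    [CommRing D] [Algebra S D] (f₁ f₂ : B →ₐ[S] D) : IsNilpotent (f₁ b - f₂ b) := by
  simpa using hb.map (Algebra.TensorProduct.lift f₁ f₂ fun _ _ => Commute.all _ _)

open Polynomial in
lemma subsingleton_algHom_of_isNilpotent {b : B}
    (hsurj : Function.Surjective (aeval b : S[X] →ₐ[S] B))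
    (hb : IsNilpotent (b ⊗ₜ[S] (1 : B) - 1 ⊗ₜ b)) (D : Type*) [CommRing D] [IsReduced D]
    [Algebra S D] : Subsingleton (B →ₐ[S] D) := by
  refine ⟨fun f₁ f₂ => AlgHom.ext fun x => ?_⟩
  obtain ⟨f, rfl⟩ := hsurj x
  rw [← aeval_algHom_apply, ← aeval_algHom_apply,
    sub_eq_zero.mp (isNilpotent_algHom_sub hb f₁ f₂).eq_zero]

/-- The unique point over an algebraic closure is fixed by the Galois group. -/
lemma nonempty_algHom_of_subsingleton [Algebra.IsIntegral S B] [FaithfulSMul S B] (F : Type*)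
    [Field F] [PerfectField F] [Algebra S F] [Subsingleton (B →ₐ[S] AlgebraicClosure F)] :
    Nonempty (B →ₐ[S] F) := by
  let Ω := AlgebraicClosure F
  obtain ⟨φ⟩ := nonempty_algHom_of_isIntegral (S := S) (B := B) Ω
  have hfix (x : B) : φ x ∈ (IsScalarTower.toAlgHom S F Ω).range := by
    obtain ⟨y, hy⟩ := (InfiniteGalois.mem_range_algebraMap_iff_fixed (k := F) (φ x)).mpr fun σ =>
      congr($(Subsingleton.elim ((σ.toAlgHom.restrictScalars S).comp φ) φ) x)
    exact ⟨y, hy⟩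
  let e := AlgEquiv.ofInjective (IsScalarTower.toAlgHom S F Ω) (algebraMap F Ω).injective
  exact ⟨e.symm.toAlgHom.comp (φ.codRestrict _ hfix)⟩

lemma exists_injective_linearMap_of_isFractionRing {D V F : Type*} [CommRing D] [IsDomain D]
    [Field F] [Algebra D F] [IsFractionRing D F] [AddCommGroup V] [Module D V] [Module.Finite D V]
    {f : V →ₗ[D] F} (hf : Function.Injective f) :
    ∃ i : V →ₗ[D] D, Function.Injective i := by
  have hfg : (LinearMap.range f).FG := Module.Finite.iff_fg.mp inferInstance
  obtain ⟨d, hd, hrange⟩ := FractionalIdeal.isFractional_of_fg (S := nonZeroDivisors D) hfg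
  have hinj : Function.Injective (Algebra.linearMap D F) := IsFractionRing.injective D F
  have hdf : Function.Injective (d • f) :=
    (smul_right_injective F (nonZeroDivisors.ne_zero hd)).comp hf
  let f' : V →ₗ[D] LinearMap.range (Algebra.linearMap D F) :=
    (d • f).codRestrict _ fun x => hrange _ ⟨x, rfl⟩
  have hf' : Function.Injective f' := (LinearMap.injective_codRestrict_iff _).mpr hdf
  let e := LinearEquiv.ofInjective (Algebra.linearMap D F) hinj
  exact ⟨e.symm.toLinearMap ∘ₗ f', e.symm.injective.comp hf'⟩

lemma exists_injective_quotient_ker [Module.Finite S B] (p : Ideal S) [p.IsPrime]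
    (φ : B →ₐ[S] FractionRing (S ⧸ p)) :
    ∃ i : (B ⧸ RingHom.ker φ) →ₗ[S] S ⧸ p, Function.Injective i := by
  have : (RingHom.ker φ).LiesOver p := ⟨by
    ext s
    rw [Ideal.under, Ideal.mem_comap, RingHom.mem_ker, φ.commutes,
      IsScalarTower.algebraMap_apply S (S ⧸ p), FaithfulSMul.algebraMap_eq_zero_iff,
      Ideal.Quotient.algebraMap_eq, Ideal.Quotient.eq_zero_iff_mem]⟩
  have : Module.Finite (S ⧸ p) (B ⧸ RingHom.ker φ) := .of_restrictScalars_finite S _ _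
  let f : (B ⧸ RingHom.ker φ) →ₗ[S ⧸ p] FractionRing (S ⧸ p) :=
    (Ideal.kerLiftAlg φ).toLinearMap.extendScalarsOfSurjective Ideal.Quotient.mk_surjective
  obtain ⟨i, hi⟩ := exists_injective_linearMap_of_isFractionRing (f := f)
    (Ideal.kerLiftAlg_injective φ)
  exact ⟨i.restrictScalars S, hi⟩

end RationalPoints

section PolynomialFunctionals

open Polynomial

section Module

variable {S B N : Type*} [CommRing S] [CommRing B] [Algebra S B] [AddCommGroup N] [Module B N]

lemma linearMap_ext_map {ν ν' : B[X] →ₗ[B] N}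
    (h : ∀ f : S[X], ν (f.map (algebraMap S B)) = ν' (f.map (algebraMap S B))) : ν = ν' := by
  refine (basisMonomials B).ext fun n => ?_
  simpa [monomial_one_right_eq_X_pow] using h (X ^ n)

/-- Dividing by the monic polynomial `P` splits multiplication by `P`. -/
lemma exists_comp_mulLeft_eq {P : B[X]} (hP : P.Monic) (η : B[X] →ₗ[B] N) :
    ∃ ξ : B[X] →ₗ[B] N, ξ ∘ₗ LinearMap.mulLeft B P = η := by
  have hdiv (f g : B[X]) (h : P * f = g - g %ₘ P) : g /ₘ P = f := by
    refine hP.isRegular.left ?_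
    change P * _ = P * f
    rw [h, eq_sub_iff_add_eq', modByMonic_add_div]
  let δ : B[X] →ₗ[B] B[X] :=
    { toFun f := f /ₘ P
      map_add' f g := hdiv _ _ (by
        rw [add_modByMonic, mul_add]
        linear_combination modByMonic_add_div f P + modByMonic_add_div g P)
      map_smul' c f := hdiv _ _ (by
        rw [smul_modByMonic, RingHom.id_apply, mul_smul_comm, ← smul_sub,
          eq_sub_of_add_eq' (modByMonic_add_div f P)]) }
  refine ⟨η ∘ₗ δ, LinearMap.ext fun f => ?_⟩
  exact congrArg η (mul_divByMonic_cancel_left f hP)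

variable [Module S N] [IsScalarTower S B N]

/-- The `B`-linear functional on `B[X]` with the same values on the powers of `X` as a given
`S`-linear functional on `S[X]`. -/
noncomputable def extendFunctional (B : Type*) [CommRing B] [Module B N] (μ : S[X] →ₗ[S] N) :
    B[X] →ₗ[B] N :=
  (basisMonomials B).constr B fun n => μ (X ^ n)

lemma extendFunctional_X_pow (B : Type*) [CommRing B] [Module B N] (μ : S[X] →ₗ[S] N) (n : ℕ) :
    extendFunctional B μ (X ^ n) = μ (X ^ n) := by
  have hX : basisMonomials B n = X ^ n := by
    rw [coe_basisMonomials]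
    exact monomial_one_right_eq_X_pow n
  rw [extendFunctional, ← hX, Module.Basis.constr_basis]

lemma extendFunctional_map (μ : S[X] →ₗ[S] N) (f : S[X]) :
    extendFunctional B μ (f.map (algebraMap S B)) = μ f := by
  induction f using Polynomial.induction_on' with
  | add p q hp hq => rw [Polynomial.map_add, map_add, hp, hq, map_add]
  | monomial n a =>
    rw [← C_mul_X_pow_eq_monomial, Polynomial.map_mul, map_C, Polynomial.map_pow, map_X,
      ← smul_eq_C_mul, map_smul, extendFunctional_X_pow, algebraMap_smul, ← map_smul, smul_eq_C_mul]

/-- The `B`-linear extension of the functional `g ↦ L (g * f)` on `S[X]`. -/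
noncomputable def mulFunctional (B : Type*) [CommRing B] [Module B N] {𝔞 : Ideal S[X]}
    (L : 𝔞 →ₗ[S] N) (f : 𝔞) : B[X] →ₗ[B] N :=
  extendFunctional B (L ∘ₗ (LinearMap.toSpanSingleton S[X] 𝔞 f).restrictScalars S)

variable {𝔞 : Ideal S[X]}

lemma mulFunctional_map (L : 𝔞 →ₗ[S] N) (f : 𝔞) (g : S[X]) :
    mulFunctional B L f (g.map (algebraMap S B)) = L (g • f) :=
  extendFunctional_map _ g

lemma mulFunctional_comm (L : 𝔞 →ₗ[S] N) (f f' : 𝔞) (P : B[X]) :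
    mulFunctional B L f ((f' : S[X]).map (algebraMap S B) * P) =
      mulFunctional B L f' ((f : S[X]).map (algebraMap S B) * P) := by
  suffices h : mulFunctional B L f ∘ₗ LinearMap.mulLeft B ((f' : S[X]).map (algebraMap S B)) =
      mulFunctional B L f' ∘ₗ LinearMap.mulLeft B ((f : S[X]).map (algebraMap S B)) from
    LinearMap.congr_fun h P
  refine linearMap_ext_map (S := S) fun g => ?_
  simp only [LinearMap.comp_apply, LinearMap.mulLeft_apply, ← Polynomial.map_mul,
    mulFunctional_map]
  congr 1
  ext1
  simp only [SetLike.val_smul, smul_eq_mul]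
  ring

/-- In terms of the action of `B[X]` on functionals, `P * L` extends to the whole ring if `P` lies
in the ideal generated by `𝔞`. -/
lemma exists_functional_of_mem_map (L : 𝔞 →ₗ[S] N) {P : B[X]}
    (hP : P ∈ 𝔞.map (mapRingHom (algebraMap S B))) :
    ∃ η : B[X] →ₗ[B] N, ∀ (f : 𝔞) (Q : B[X]),
      η ((f : S[X]).map (algebraMap S B) * Q) = mulFunctional B L f (P * Q) := by
  induction hP using Submodule.span_induction with
  | mem P hP =>
    obtain ⟨f₀, hf₀, rfl⟩ := hP
    exact ⟨mulFunctional B L ⟨f₀, hf₀⟩, fun f Q => mulFunctional_comm L ⟨f₀, hf₀⟩ f Q⟩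
  | zero => exact ⟨0, fun f Q => by simp⟩
  | add P P' _ _ hP hP' =>
    obtain ⟨η, hη⟩ := hP
    obtain ⟨η', hη'⟩ := hP'
    exact ⟨η + η', fun f Q => by rw [LinearMap.add_apply, hη, hη', add_mul, map_add]⟩
  | smul P' P _ hP =>
    obtain ⟨η, hη⟩ := hP
    exact ⟨η ∘ₗ LinearMap.mulLeft B P', fun f Q => by
      rw [LinearMap.comp_apply, LinearMap.mulLeft_apply, mul_left_comm, hη, smul_eq_mul,
        mul_assoc, mul_left_comm]⟩

/-- An extension of `P * L` divided by `P` agrees with `L` on multiples of `P`. -/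
lemma exists_linearMap_eq_on_mul {𝔟 : Ideal S[X]} {P : B[X]} (hP : P.Monic)
    (hP𝔞 : P ∈ 𝔞.map (mapRingHom (algebraMap S B)))
    (hP𝔟 : ∀ f ∈ 𝔟, P ∣ f.map (algebraMap S B)) (L : 𝔞 →ₗ[S] N) :
    ∃ L' : S[X] →ₗ[S] N, ∀ f (hf : f ∈ 𝔟 * 𝔞), L' f = L ⟨f, Ideal.mul_le_right hf⟩ := by
  obtain ⟨η, hη⟩ := exists_functional_of_mem_map L hP𝔞
  obtain ⟨ξ, rfl⟩ := exists_comp_mulLeft_eq hP η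
  refine ⟨ξ.restrictScalars S ∘ₗ (mapAlgHom (Algebra.ofId S B)).toLinearMap, fun f hf => ?_⟩
  induction hf using Submodule.mul_induction_on' with
  | mem_mul_mem f hf f' hf' =>
    obtain ⟨Q, hQ⟩ := hP𝔟 f hf
    have hξ := hη ⟨f', hf'⟩ Q
    rw [← hQ, mulFunctional_map, LinearMap.comp_apply, LinearMap.mulLeft_apply, mul_left_comm,
      ← hQ, mul_comm, ← Polynomial.map_mul] at hξ
    exact hξ
  | add f hf g hg ihf ihg =>
    rw [map_add, ihf, ihg, ← map_add]
    rfl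

/-- Functionals on a power of the ideal `K` with values in `M` extend to all of `S[X]`, with a
prescribed value at `1`, after restriction to a higher power of `K`. -/
def ExtendsFunctionals (K : Ideal S[X]) (M : Type*) [AddCommGroup M] [Module S M] : Prop :=
  ∀ (j : ℕ) (L : (K ^ j : Ideal S[X]) →ₗ[S] M) (m : M), ∃ (i : ℕ) (hi : j ≤ i)
    (L' : S[X] →ₗ[S] M), L' 1 = m ∧ ∀ f (hf : f ∈ K ^ i), L' f = L ⟨f, Ideal.pow_le_pow_right hi hf⟩

lemma X_sub_C_pow_dvd_map {b : B} {m : ℕ} {f : S[X]}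
    (hf : f ∈ RingHom.ker (aeval b : S[X] →ₐ[S] B) ^ m) :
    (X - C b) ^ m ∣ f.map (algebraMap S B) := by
  have hle : (RingHom.ker (aeval b : S[X] →ₐ[S] B)).map (mapRingHom (algebraMap S B)) ≤
      Ideal.span {X - C b} := by
    refine Ideal.map_le_iff_le_comap.mpr fun g hg => ?_
    rw [Ideal.mem_comap, Ideal.mem_span_singleton, dvd_iff_isRoot, coe_mapRingHom, IsRoot,
      eval_map_algebraMap]
    exact hg
  rw [← Ideal.mem_span_singleton, ← Ideal.span_singleton_pow]
  refine Ideal.pow_right_mono hle m ?_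
  rw [← Ideal.map_pow]
  exact Ideal.mem_map_of_mem _ hf

lemma exists_X_sub_C_pow_mem_map_ker {b : B}
    (hsurj : Function.Surjective (aeval b : S[X] →ₐ[S] B))
    (hb : IsNilpotent (b ⊗ₜ[S] (1 : B) - 1 ⊗ₜ b)) :
    ∃ n, (X - C b) ^ n ∈
      (RingHom.ker (aeval b : S[X] →ₐ[S] B)).map (mapRingHom (algebraMap S B)) := by
  set K := RingHom.ker (aeval b : S[X] →ₐ[S] B)
  let mk := Ideal.Quotient.mkₐ S (K.map (mapRingHom (algebraMap S B)))
  let f₁ := mk.comp (mapAlgHom (Algebra.ofId S B))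
  have hf₁ : K ≤ RingHom.ker f₁ := fun f hf =>
    Ideal.Quotient.eq_zero_iff_mem.mpr (Ideal.mem_map_of_mem _ hf)
  let f₂ : B →ₐ[S] _ := AlgHom.liftOfSurjective (aeval b) hsurj f₁ hf₁
  have hf₂ : f₂ b = mk X := by
    simpa [f₁] using AlgHom.liftOfSurjective_apply (aeval b) hsurj f₁ hf₁ X
  obtain ⟨n, hn⟩ := isNilpotent_algHom_sub hb f₂ (mk.comp (IsScalarTower.toAlgHom S B B[X]))
  refine ⟨n, Ideal.Quotient.eq_zero_iff_mem.mp ?_⟩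
  rw [← hn, hf₂, map_pow, map_sub]
  rfl

lemma extendsFunctionals_of_module {b : B}
    (hsurj : Function.Surjective (aeval b : S[X] →ₐ[S] B))
    (hb : IsNilpotent (b ⊗ₜ[S] (1 : B) - 1 ⊗ₜ b)) :
    ExtendsFunctionals (RingHom.ker (aeval b : S[X] →ₐ[S] B)) N := by
  intro j L m
  obtain ⟨n, hn⟩ := exists_X_sub_C_pow_mem_map_ker hsurj hb
  obtain ⟨ξ, hξ⟩ := exists_linearMap_eq_on_mul ((monic_X_sub_C b).pow (n * j))
    (by rw [Ideal.map_pow, pow_mul]; exact Ideal.pow_mem_pow hn j)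
    (fun _ => X_sub_C_pow_dvd_map (m := n * j)) L
  refine ⟨n * j + j + 1, by lia,
    ξ + (LinearMap.toSpanSingleton B N (m - ξ 1)).restrictScalars S ∘ₗ
      (aeval b : S[X] →ₐ[S] B).toLinearMap, by simp, fun f hf => ?_⟩
  have hf₀ : aeval b f = 0 := Ideal.pow_le_self (by lia) hf
  rw [LinearMap.add_apply, LinearMap.comp_apply, AlgHom.toLinearMap_apply, hf₀, map_zero, add_zero]
  refine hξ f ?_
  rw [← pow_add]
  exact Ideal.pow_le_pow_right (by lia) hf

end Module

section Devissage

variable {S : Type*} [CommRing S] {K : Ideal S[X]}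

lemma ExtendsFunctionals.of_exact {M' M M'' : Type*} [AddCommGroup M'] [Module S M']
    [AddCommGroup M] [Module S M] [AddCommGroup M''] [Module S M''] {i : M' →ₗ[S] M}
    (hi : Function.Injective i) {π : M →ₗ[S] M''} (hπ : Function.Surjective π)
    (hex : Function.Exact i π) (h' : ExtendsFunctionals K M') (h'' : ExtendsFunctionals K M'') :
    ExtendsFunctionals K M := by
  intro j L m
  obtain ⟨j₁, hj₁, L₁, hL₁, hL₁'⟩ := h'' j (π ∘ₗ L) (π m)
  obtain ⟨L₂, rfl⟩ := Module.projective_lifting_property π L₁ hπ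
  let e := LinearEquiv.ofInjective i hi
  have he (y : LinearMap.range i) : i (e.symm y) = y :=
    congrArg Subtype.val (e.apply_symm_apply y)
  let D : (K ^ j₁ : Ideal S[X]) →ₗ[S] M :=
    L ∘ₗ (Submodule.inclusion (Ideal.pow_le_pow_right hj₁)).restrictScalars S -
      L₂ ∘ₗ (Submodule.subtype (K ^ j₁)).restrictScalars S
  have hD (f) : D f ∈ LinearMap.range i :=
    (hex _).mp (by rw [LinearMap.sub_apply, map_sub, sub_eq_zero]; exact (hL₁' f f.2).symm)
  obtain ⟨m', hm'⟩ := (hex (m - L₂ 1)).mp (by rw [map_sub, sub_eq_zero]; exact hL₁.symm)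
  obtain ⟨j₂, hj₂, L₃, hL₃, hL₃'⟩ := h' j₁ (e.symm.toLinearMap ∘ₗ D.codRestrict _ hD) m'
  refine ⟨j₂, hj₁.trans hj₂, L₂ + i ∘ₗ L₃, ?_, fun f hf => ?_⟩
  · rw [LinearMap.add_apply, LinearMap.comp_apply, hL₃, hm', add_sub_cancel]
  · rw [LinearMap.add_apply, LinearMap.comp_apply, hL₃' f hf, LinearMap.comp_apply,
      LinearEquiv.coe_coe, he]
    exact add_sub_cancel (L₂ f) _

lemma ExtendsFunctionals.quotient_of_injective {J : Ideal S}
    (ih : ∀ J' : Ideal S, J < J' → ExtendsFunctionals K (S ⧸ J')) {M : Type*} [AddCommGroup M]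
    [Module S M] [Nontrivial M] {i : M →ₗ[S] (S ⧸ J)} (hi : Function.Injective i)
    (hM : ExtendsFunctionals K M) : ExtendsFunctionals K (S ⧸ J) := by
  let J' : Ideal S := (LinearMap.range i).comap (Submodule.mkQ J)
  have hle : J ≤ J' := fun x hx => by
    rw [Submodule.mem_comap, Submodule.mkQ_apply, (Submodule.Quotient.mk_eq_zero J).mpr hx]
    exact zero_mem _
  have hlt : J < J' := by
    obtain ⟨x, hx⟩ := exists_ne (0 : M)
    obtain ⟨y, hy⟩ := Submodule.mkQ_surjective J (i x)
    refine lt_of_le_of_ne hle fun heq => hx (hi ?_)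
    have hyJ : y ∈ J := heq ▸ ⟨x, hy.symm⟩
    rw [← hy, map_zero, Submodule.mkQ_apply, (Submodule.Quotient.mk_eq_zero J).mpr hyJ]
  refine .of_exact hi (Submodule.factor_surjective hle) (fun x => ?_) hM (ih J' hlt)
  obtain ⟨x, rfl⟩ := Submodule.mkQ_surjective J x
  exact Submodule.Quotient.mk_eq_zero J'

variable {B : Type*} [CommRing B] [Algebra S B] [Algebra ℚ S] [FaithfulSMul S B]
  [Module.Finite S B] {b : B}

lemma extendsFunctionals_quotient_of_isPrime
    (hsurj : Function.Surjective (aeval b : S[X] →ₐ[S] B))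
    (hb : IsNilpotent (b ⊗ₜ[S] (1 : B) - 1 ⊗ₜ b)) {p : Ideal S} [p.IsPrime]
    (ih : ∀ J : Ideal S, p < J →
      ExtendsFunctionals (RingHom.ker (aeval b : S[X] →ₐ[S] B)) (S ⧸ J)) :
    ExtendsFunctionals (RingHom.ker (aeval b : S[X] →ₐ[S] B)) (S ⧸ p) := by
  let F := FractionRing (S ⧸ p)
  let : Algebra ℚ F := ((algebraMap S F).comp (algebraMap ℚ S)).toAlgebra
  have : CharZero F := algebraRat.charZero F
  have := subsingleton_algHom_of_isNilpotent hsurj hb (AlgebraicClosure F)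
  obtain ⟨φ⟩ := nonempty_algHom_of_subsingleton (S := S) (B := B) F
  obtain ⟨i, hi⟩ := exists_injective_quotient_ker p φ
  have : Nontrivial (B ⧸ RingHom.ker φ) := Ideal.Quotient.nontrivial_iff.mpr (RingHom.ker_ne_top φ)
  exact .quotient_of_injective ih hi (extendsFunctionals_of_module hsurj hb)

lemma extendsFunctionals_quotient [IsNoetherianRing S]
    (hsurj : Function.Surjective (aeval b : S[X] →ₐ[S] B))
    (hb : IsNilpotent (b ⊗ₜ[S] (1 : B) - 1 ⊗ₜ b)) (J : Ideal S) :
    ExtendsFunctionals (RingHom.ker (aeval b : S[X] →ₐ[S] B)) (S ⧸ J) := by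
  induction J using WellFoundedGT.induction with
  | ind J ih =>
  by_cases htop : J = ⊤
  · subst htop
    exact fun j L m => ⟨j, le_rfl, 0, Subsingleton.elim _ _, fun f hf => Subsingleton.elim _ _⟩
  by_cases hprime : J.IsPrime
  · exact extendsFunctionals_quotient_of_isPrime hsurj hb ih
  obtain ⟨x, hx, y, hy, hxy⟩ := (Ideal.not_isPrime_iff.mp hprime).resolve_left htop
  let J' : Ideal S := Submodule.comap (LinearMap.lsmul S S x) J
  have hlt : J < J' :=
    lt_of_le_of_ne (fun z hz => J.mul_mem_left x hz) fun heq => hy (heq ▸ hxy)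
  have hJ' : J' ≠ ⊤ := fun heq => hx <| by
    have h1 : (1 : S) ∈ J' := heq ▸ Submodule.mem_top
    simpa [J'] using h1
  have : Nontrivial (S ⧸ J') := Ideal.Quotient.nontrivial_iff.mpr hJ'
  let i : (S ⧸ J') →ₗ[S] (S ⧸ J) := Submodule.mapQ J' J (LinearMap.lsmul S S x) le_rfl
  have hi : Function.Injective i := by
    rw [← LinearMap.ker_eq_bot, Submodule.ker_mapQ]
    exact Submodule.mkQ_map_self J'
  exact .quotient_of_injective ih hi (ih J' hlt)

end Devissage

section BinomialEquations

variable {S B : Type*} [CommRing S] [CommRing B] [Algebra S B] {b : B}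

lemma exists_functional_map_X_sub_C_pow_eq_zero [Algebra ℚ S] [FaithfulSMul S B]
    [Module.Finite S B] [IsNoetherianRing S]
    (hsurj : Function.Surjective (aeval b : S[X] →ₐ[S] B))
    (hb : IsNilpotent (b ⊗ₜ[S] (1 : B) - 1 ⊗ₜ b)) :
    ∃ (q : ℕ) (L : S[X] →ₗ[S] S), L 1 = 1 ∧ ∀ n ≥ q,
      extendFunctional B (Algebra.linearMap S B ∘ₗ L) ((X - C b) ^ n) = 0 := by
  set K := RingHom.ker (aeval b : S[X] →ₐ[S] B)
  obtain ⟨i, _, L, hL1, hL⟩ := extendsFunctionals_quotient hsurj hb ⊥ 0 0 1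
  obtain ⟨N, hN⟩ := exists_X_sub_C_pow_mem_map_ker hsurj hb
  let e : (S ⧸ (⊥ : Ideal S)) ≃ₗ[S] S := Submodule.quotEquivOfEqBot ⊥ rfl
  let ν := extendFunctional B (Algebra.linearMap S B ∘ₗ e.toLinearMap ∘ₗ L)
  have hK {P : B[X]} (hP : P ∈ (K ^ i).map (mapRingHom (algebraMap S B))) :
      ∀ Q, ν (P * Q) = 0 := by
    induction hP using Submodule.span_induction with
    | mem P hP =>
      obtain ⟨f, hf, rfl⟩ := hP
      suffices h : ν ∘ₗ LinearMap.mulLeft B (f.map (algebraMap S B)) = 0 from LinearMap.congr_fun h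
      refine linearMap_ext_map (S := S) fun g => ?_
      rw [LinearMap.comp_apply, LinearMap.mulLeft_apply, ← Polynomial.map_mul,
        extendFunctional_map, LinearMap.comp_apply, LinearMap.comp_apply,
        hL _ (Ideal.mul_mem_right g _ hf)]
      simp
    | zero => simp
    | add P P' _ _ hP hP' => exact fun Q => by rw [add_mul, map_add, hP, hP', add_zero]
    | smul P' P _ hP => exact fun Q => by rw [smul_eq_mul, mul_assoc, mul_left_comm, hP]
  refine ⟨N * i, e.toLinearMap ∘ₗ L, congrArg e hL1, fun n hn => ?_⟩
  have hmem : (X - C b) ^ n ∈ (K ^ i).map (mapRingHom (algebraMap S B)) := by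
    rw [← Nat.add_sub_cancel' hn, pow_add, Ideal.map_pow, pow_mul]
    exact Ideal.mul_mem_right _ _ (Ideal.pow_mem_pow hN i)
  simpa using hK hmem 1

lemma extendFunctional_X_sub_C_pow (L : S[X] →ₗ[S] S) (n : ℕ) :
    (-1) ^ n * extendFunctional B (Algebra.linearMap S B ∘ₗ L) ((X - C b) ^ n) =
      aeval b (appellPoly (fun m => (-1) ^ m * L (X ^ m)) n) := by
  have hX (m : ℕ) : extendFunctional B (Algebra.linearMap S B ∘ₗ L)
      (X ^ m * (-C b) ^ (n - m) * (n.choose m : B[X])) =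
        (-b) ^ (n - m) * (n.choose m : B) * algebraMap S B (L (X ^ m)) := by
    rw [mul_assoc, mul_comm, ← C_neg, ← C_pow, ← C_eq_natCast, ← C_mul, ← smul_eq_C_mul, map_smul,
      extendFunctional_X_pow, smul_eq_mul]
    rfl
  rw [sub_eq_add_neg, add_pow, map_sum, appellPoly, map_sum, Finset.mul_sum]
  refine Finset.sum_congr rfl fun m hm => ?_
  obtain ⟨d, rfl⟩ := Nat.exists_eq_add_of_le (Finset.mem_range_succ_iff.mp hm)
  have hsign : ((-1 : B) ^ d) * (-1) ^ d = 1 := by rw [← mul_pow]; simp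
  rw [hX, Nat.add_sub_cancel_left, neg_pow b, pow_add, map_mul (aeval b), aeval_C,
    map_pow (aeval b), aeval_X, map_mul, map_mul, map_pow (algebraMap S B) (-1), map_neg, map_one,
    map_natCast]
  linear_combination
    ((m + d).choose m : B) * (-1) ^ m * algebraMap S B (L (X ^ m)) * b ^ d * hsign

/-- This is the theorem of Reid, Roberts and Singh on subintegral extensions `S ⊆ B`. -/
theorem exists_aeval_appellPoly_eq_zero [Algebra ℚ S] [FaithfulSMul S B] [Module.Finite S B]
    [IsNoetherianRing S] (hsurj : Function.Surjective (aeval b : S[X] →ₐ[S] B))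
    (hb : IsNilpotent (b ⊗ₜ[S] (1 : B) - 1 ⊗ₜ b)) :
    ∃ (q : ℕ) (a : ℕ → S), a 0 = 1 ∧ ∀ n ≥ q, aeval b (appellPoly a n) = 0 := by
  obtain ⟨q, L, hL, hq⟩ := exists_functional_map_X_sub_C_pow_eq_zero hsurj hb
  refine ⟨q, fun m => (-1) ^ m * L (X ^ m), by simp [hL], fun n hn => ?_⟩
  rw [← extendFunctional_X_sub_C_pow, hq n hn, mul_zero]

end BinomialEquations

end PolynomialFunctionals

section TaylorExpansion

open PowerSeries

variable {k V : Type*} [CommRing k] [CommRing V] [Algebra k V]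

/-- The series with coefficients `κ v, κ (s v), κ (s (s v)), …`, which is the Taylor expansion of
`v` if `s` is the difference quotient `(v - κ v) / ϖ` for a parameter `ϖ`. -/
noncomputable def taylorSeries (κ : V →ₐ[k] k) (s : Module.End k V) : V →ₗ[k] k⟦X⟧ where
  toFun v := PowerSeries.mk fun n => κ ((s ^ n) v)
  map_add' v w := by ext; simp
  map_smul' c v := by ext; simp

variable {κ : V →ₐ[k] k} {s : Module.End k V}

lemma constantCoeff_taylorSeries (v : V) : constantCoeff (taylorSeries κ s v) = κ v := by
  simp [taylorSeries]

lemma taylorSeries_eq (v : V) :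
    taylorSeries κ s v = C (κ v) + X * taylorSeries κ s (s v) := by
  ext n
  cases n with
  | zero => simp [constantCoeff_taylorSeries]
  | succ n => simp [taylorSeries, coeff_succ_X_mul, pow_succ]

lemma taylorSeries_one (hs : s 1 = 0) : taylorSeries κ s 1 = 1 := by
  rw [taylorSeries_eq, hs, map_zero, mul_zero, add_zero, map_one, map_one]

lemma taylorSeries_mul (hs : ∀ v w, s (v * w) = κ v • s w + s v * w) (v w : V) :
    taylorSeries κ s (v * w) = taylorSeries κ s v * taylorSeries κ s w := by
  ext n
  induction n generalizing v w with
  | zero => simp [constantCoeff_taylorSeries]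
  | succ n ih =>
    have hw : coeff (n + 1) (taylorSeries κ s w) = coeff n (taylorSeries κ s (s w)) := by
      rw [taylorSeries_eq]
      simp [coeff_succ_X_mul]
    rw [taylorSeries_eq, map_add, coeff_succ_X_mul, hs, map_add, map_add, map_smul, map_smul, ih,
      taylorSeries_eq v, add_mul, mul_assoc, map_add, coeff_C_mul, coeff_succ_X_mul, hw]
    simp

lemma pow_dvd_of_taylorSeries_eq_zero {ϖ : V}
    (hs : ∀ v, ϖ * s v = v - algebraMap k V (κ v)) {v : V} (hv : taylorSeries κ s v = 0) (n : ℕ) :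
    ϖ ^ n ∣ v := by
  induction n generalizing v with
  | zero => simp
  | succ n ih =>
    have hκ : κ v = 0 := by rw [← constantCoeff_taylorSeries (s := s), hv, map_zero]
    have hsv : taylorSeries κ s (s v) = 0 := by
      rw [taylorSeries_eq, hκ, map_zero, zero_add] at hv
      exact X_mul_inj.mp (hv.trans (mul_zero X).symm)
    have hv' : v = ϖ * s v := by rw [hs, hκ, map_zero, sub_zero]
    rw [hv', pow_succ']
    exact mul_dvd_mul_left ϖ (ih hsv)

lemma exists_differenceQuotient [IsDomain V] (κ : V →ₐ[k] k) {ϖ : V} (hϖ : ϖ ≠ 0)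
    (hker : RingHom.ker κ = Ideal.span {ϖ}) :
    ∃ s : Module.End k V, ∀ v, ϖ * s v = v - algebraMap k V (κ v) := by
  let D : Module.End k V := LinearMap.id - Algebra.linearMap k V ∘ₗ κ.toLinearMap
  have hD (v : V) : D v ∈ LinearMap.range (LinearMap.mulLeft k ϖ) := by
    have hv : D v ∈ RingHom.ker κ := by
      rw [RingHom.mem_ker]
      simp [D]
    rw [hker, Ideal.mem_span_singleton'] at hv
    obtain ⟨w, hw⟩ := hv
    exact ⟨w, by rw [LinearMap.mulLeft_apply, mul_comm, hw]⟩
  let e := LinearEquiv.ofInjective (LinearMap.mulLeft k ϖ) (mul_right_injective₀ hϖ)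
  exact ⟨e.symm.toLinearMap ∘ₗ D.codRestrict _ hD, fun v =>
    congrArg Subtype.val (e.apply_symm_apply (D.codRestrict _ hD v))⟩

theorem exists_injective_algHom_powerSeries_of_ker_eq_span [Nontrivial k] [IsDomain V]
    [WfDvdMonoid V] (κ : V →ₐ[k] k) {ϖ : V} (hϖ : ϖ ≠ 0) (hker : RingHom.ker κ = Ideal.span {ϖ}) :
    ∃ ψ : V →ₐ[k] k⟦X⟧, (∀ v, constantCoeff (ψ v) = κ v) ∧ Function.Injective ψ := by
  obtain ⟨s, hs⟩ := exists_differenceQuotient κ hϖ hker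
  have hs_one : s 1 = 0 := mul_left_cancel₀ hϖ (by simp [hs])
  have hs_mul (v w : V) : s (v * w) = κ v • s w + s v * w := mul_left_cancel₀ hϖ <| by
    rw [hs, map_mul, map_mul, mul_add, mul_smul_comm, hs, ← mul_assoc, hs, Algebra.smul_def]
    ring
  have hϖ_unit : ¬IsUnit ϖ := fun h => by
    have hκ : κ ϖ = 0 := by
      rw [← RingHom.mem_ker, hker]
      exact Ideal.mem_span_singleton_self ϖ
    exact (h.map κ).ne_zero hκ
  refine ⟨.ofLinearMap (taylorSeries κ s) (taylorSeries_one hs_one) (taylorSeries_mul hs_mul),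
    constantCoeff_taylorSeries, (injective_iff_map_eq_zero _).mpr fun v hv => ?_⟩
  by_contra hv₀
  obtain ⟨n, hn⟩ := FiniteMultiplicity.of_not_isUnit hϖ_unit hv₀
  exact hn (pow_dvd_of_taylorSeries_eq_zero hs hv _)

end TaylorExpansion

section Curves

variable {k : Type*} [Field k]

theorem exists_injective_algHom_powerSeries_of_isDedekindDomain {O : Type*} [CommRing O]
    [IsDedekindDomain O] [Algebra k O] (κ : O →ₐ[k] k) (hκ : RingHom.ker κ ≠ ⊥) :
    ∃ ψ : O →ₐ[k] PowerSeries k, (∀ r, PowerSeries.constantCoeff (ψ r) = κ r) ∧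
      Function.Injective ψ := by
  have hprime : (RingHom.ker κ).IsPrime := RingHom.ker_isPrime _
  let V := Localization.AtPrime (RingHom.ker κ)
  have : IsDiscreteValuationRing V :=
    IsLocalization.AtPrime.isDiscreteValuationRing_of_dedekind_domain O hκ V
  have hunit (y : (RingHom.ker κ).primeCompl) : IsUnit (κ y) := Ne.isUnit y.2
  let κV : V →ₐ[k] k := IsLocalization.liftAlgHom (M := (RingHom.ker κ).primeCompl) (f := κ) hunit
  have hκV (r : O) : κV (algebraMap O V r) = κ r := IsLocalization.lift_eq _ r
  have hmax : (RingHom.ker κV).IsMaximal :=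
    RingHom.ker_isMaximal_of_surjective _ fun c => ⟨algebraMap k V c, κV.commutes c⟩
  obtain ⟨ϖ, hϖ⟩ := IsDiscreteValuationRing.exists_irreducible V
  obtain ⟨ψ, hψ, hψi⟩ := exists_injective_algHom_powerSeries_of_ker_eq_span κV hϖ.ne_zero
    ((IsLocalRing.eq_maximalIdeal hmax).trans hϖ.maximalIdeal_eq)
  exact ⟨ψ.comp (IsScalarTower.toAlgHom k O V), fun r => (hψ _).trans (hκV r),
    hψi.comp (IsLocalization.injective V (RingHom.ker κ).primeCompl_le_nonZeroDivisors)⟩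

lemma ker_ne_bot_of_not_isField {O : Type*} [CommRing O] [Algebra k O] (hO : ¬IsField O)
    (κ : O →ₐ[k] k) : RingHom.ker κ ≠ ⊥ := fun hκ => by
  have hbij : Function.Bijective κ :=
    ⟨(RingHom.injective_iff_ker_eq_bot _).mpr hκ, fun c => ⟨algebraMap k O c, κ.commutes c⟩⟩
  exact hO ((AlgEquiv.ofBijective κ hbij).toMulEquiv.isField (Field.toIsField k))

variable [IsAlgClosed k]

lemma exists_algHom_comp_eq_of_isIntegral {R O : Type*} [CommRing R] [CommRing O] [Algebra k R]
    [Algebra k O] [Algebra R O] [IsScalarTower k R O] [Algebra.IsIntegral R O] [FaithfulSMul R O]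
    (ω : R →ₐ[k] k) : ∃ κ : O →ₐ[k] k, ∀ r, κ (algebraMap R O r) = ω r := by
  let : Algebra R k := ω.toRingHom.toAlgebra
  have : IsScalarTower k R k := .of_algebraMap_eq fun c => (ω.commutes c).symm
  obtain ⟨κ⟩ := nonempty_algHom_of_isIntegral (S := R) (B := O) k
  exact ⟨κ.restrictScalars k, κ.commutes⟩

theorem exists_injective_algHom_powerSeries_of_finite [CharZero k] {D R : Type*} [CommRing D]
    [IsDedekindDomain D] [CommRing R] [IsDomain R] [Algebra k D] [Algebra k R] [Algebra D R]
    [IsScalarTower k D R] [Module.Finite D R] [FaithfulSMul D R] (hD : ¬IsField D)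
    (ω : R →ₐ[k] k) :
    ∃ ψ : R →ₐ[k] PowerSeries k, (∀ r, PowerSeries.constantCoeff (ψ r) = ω r) ∧
      Function.Injective ψ := by
  let L := FractionRing R
  have : FaithfulSMul D L := .trans D R L
  let K := FractionRing D
  have : CharZero K := charZero_of_injective_algebraMap (algebraMap k K).injective
  let : Algebra K L := FractionRing.liftAlgebra D L
  have : IsScalarTower D K L := FractionRing.isScalarTower_liftAlgebra D L
  have : FiniteDimensional K L := .of_isLocalization D R (nonZeroDivisors D)
  let O := integralClosure D L
  have : IsDedekindDomain O := integralClosure.isDedekindDomain D K L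
  let ι : R →ₐ[D] O := (IsScalarTower.toAlgHom D R L).codRestrict _ fun r =>
    (Algebra.IsIntegral.isIntegral (R := D) r).algebraMap
  have hι : Function.Injective ι := .of_comp (f := Subtype.val) (IsFractionRing.injective R L)
  let : Algebra R O := ι.toRingHom.toAlgebra
  have : FaithfulSMul R O := (faithfulSMul_iff_algebraMap_injective R O).mpr hι
  have : IsScalarTower D R O := .of_algebraMap_eq fun x => (ι.commutes x).symm
  have : IsScalarTower k R O := .to₁₃₄ k D R O
  have : Algebra.IsIntegral R O := .tower_top D
  have hO : ¬IsField O := fun h => hD <|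
    isField_of_isIntegral_of_isField (FaithfulSMul.algebraMap_injective D O) h
  obtain ⟨κ, hκ⟩ := exists_algHom_comp_eq_of_isIntegral (O := O) ω
  obtain ⟨ψ, hψ, hψi⟩ := exists_injective_algHom_powerSeries_of_isDedekindDomain κ
    (ker_ne_bot_of_not_isField hO κ)
  exact ⟨ψ.comp (IsScalarTower.toAlgHom k R O), fun r => (hψ _).trans (hκ r), hψi.comp hι⟩

open Polynomial in
lemma exists_algHom_powerSeries_ker_eq [CharZero k] {Q R : Type*} [CommRing Q] [CommRing R]
    [Algebra k Q] [Algebra k R] [Algebra Q R] [IsScalarTower k Q R] [Module.Finite Q R]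
    {l : Q →ₐ[k] k[X]} (hl : Function.Surjective l) (ω : R →ₐ[k] k) {P : Ideal R} [P.IsPrime]
    [P.LiesOver (RingHom.ker l)] (hP : P ≤ RingHom.ker ω) :
    ∃ ψ : R →ₐ[k] PowerSeries k, (∀ r, PowerSeries.constantCoeff (ψ r) = ω r) ∧
      RingHom.ker ψ = P := by
  have hprime : (RingHom.ker l).IsPrime := RingHom.ker_isPrime _
  let e := Ideal.quotientKerAlgEquivOfSurjective hl
  have : IsPrincipalIdealRing (Q ⧸ RingHom.ker l) := .of_surjective e.symm e.symm.surjective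
  have : Module.Finite (Q ⧸ RingHom.ker l) (R ⧸ P) := .of_restrictScalars_finite Q _ _
  have : FaithfulSMul (Q ⧸ RingHom.ker l) (R ⧸ P) := Ideal.Quotient.instFaithfulSMul P _
  have hfield : ¬IsField (Q ⧸ RingHom.ker l) := fun h =>
    Polynomial.not_isField k (e.symm.toMulEquiv.isField h)
  obtain ⟨ψ, hψ, hψi⟩ := exists_injective_algHom_powerSeries_of_finite hfield
    (Ideal.Quotient.liftₐ P ω hP)
  refine ⟨ψ.comp (Ideal.Quotient.mkₐ k P), fun r => hψ _, ?_⟩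
  ext r
  rw [RingHom.mem_ker, AlgHom.comp_apply, map_eq_zero_iff ψ hψi]
  exact Ideal.Quotient.eq_zero_iff_mem

end Curves

section Lines

open Polynomial

/-- Restriction of polynomial functions to the line `t ↦ o + t (c - o)`. -/
noncomputable def restrictToLine {σ k : Type*} [CommRing k] (o c : σ → k) :
    MvPolynomial σ k →ₐ[k] k[X] :=
  MvPolynomial.aeval fun i => C (o i) + C (c i - o i) * X

lemma eval_restrictToLine {σ k : Type*} [CommRing k] (o c : σ → k) (t : k)
    (f : MvPolynomial σ k) :
    (restrictToLine o c f).eval t = MvPolynomial.eval (fun i => o i + (c i - o i) * t) f := by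
  induction f using MvPolynomial.induction_on with
  | C a => simp [restrictToLine]
  | add f g hf hg => simp [hf, hg]
  | mul_X f i hf =>
    rw [map_mul, eval_mul, hf, map_mul]
    simp [restrictToLine]

variable {σ k : Type*} [Field k]

lemma restrictToLine_surjective {o c : σ → k} (hoc : o ≠ c) :
    Function.Surjective (restrictToLine o c) := by
  obtain ⟨i, hi⟩ := Function.ne_iff.mp hoc
  have hX : (c i - o i)⁻¹ • restrictToLine o c (MvPolynomial.X i - MvPolynomial.C (o i)) = X := by
    rw [inv_smul_eq_iff₀ (sub_ne_zero.mpr hi.symm), smul_eq_C_mul]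
    simp [restrictToLine]
  have hmem : X ∈ (restrictToLine o c).range := by
    rw [← hX]
    exact Subalgebra.smul_mem _ (AlgHom.mem_range_self _ _) _
  rw [← AlgHom.range_eq_top, eq_top_iff, ← Polynomial.adjoin_X]
  exact Algebra.adjoin_le (Set.singleton_subset_iff.mpr hmem)

lemma exists_restrictToLine_ne_zero [Infinite k] (o : σ → k) {G : MvPolynomial σ k} (hG : G ≠ 0)
    (hGo : MvPolynomial.eval o G = 0) : ∃ c, o ≠ c ∧ restrictToLine o c G ≠ 0 := by
  obtain ⟨c, hc⟩ : ∃ c, MvPolynomial.eval c G ≠ 0 := by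
    by_contra! hG'
    exact hG (MvPolynomial.funext fun x => by rw [hG', map_zero])
  refine ⟨c, fun hoc => hc (hoc ▸ hGo), fun h => hc ?_⟩
  have hc' := eval_restrictToLine o c 1 G
  rw [h, eval_zero] at hc'
  simpa using hc'.symm

end Lines

section CurveSelection

variable {k R : Type*} [Field k] [IsAlgClosed k] [CharZero k] [CommRing R] [Algebra k R]

lemma exists_algHom_powerSeries_of_isDomain [IsDomain R] [Algebra.FiniteType k R] (ω : R →ₐ[k] k)
    {g : R} (hg : g ≠ 0) (hωg : ω g = 0) :
    ∃ ψ : R →ₐ[k] PowerSeries k, (∀ r, PowerSeries.constantCoeff (ψ r) = ω r) ∧ ψ g ≠ 0 := by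
  obtain ⟨s, f, hf, hfin⟩ := exists_finite_inj_algHom_of_fg k R
  let Q := MvPolynomial (Fin s) k
  let : Algebra Q R := f.toRingHom.toAlgebra
  have : IsScalarTower k Q R := .of_algebraMap_eq fun x => (f.commutes x).symm
  have : Module.Finite Q R := hfin
  have : FaithfulSMul Q R := (faithfulSMul_iff_algebraMap_injective Q R).mpr hf
  obtain ⟨G, hGg, hG⟩ := Submodule.exists_mem_ne_zero_of_ne_bot
    (Ideal.comap_ne_bot_of_integral_mem hg (Ideal.mem_span_singleton_self g)
      (Algebra.IsIntegral.isIntegral (R := Q) g))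
  rw [Ideal.mem_comap, Ideal.mem_span_singleton] at hGg
  let o : Fin s → k := fun i => ω (f (MvPolynomial.X i))
  have ho (x : Q) : ω (algebraMap Q R x) = MvPolynomial.eval o x := by
    have : ω.comp f = MvPolynomial.aeval o := by ext i; simp [o]
    rw [← MvPolynomial.coe_aeval_eq_eval, RingHom.coe_coe, ← this]
    rfl
  obtain ⟨c, hoc, hcG⟩ := exists_restrictToLine_ne_zero o hG (by
    rw [← ho]
    exact zero_dvd_iff.mp (hωg ▸ map_dvd ω hGg))
  have hprime : (RingHom.ker ω).IsPrime := RingHom.ker_isPrime _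
  have hprime' : (RingHom.ker (restrictToLine o c)).IsPrime := RingHom.ker_isPrime _
  have hle : RingHom.ker (restrictToLine o c) ≤ (RingHom.ker ω).under Q := fun x hx => by
    have hx₀ := eval_restrictToLine o c 0 x
    rw [RingHom.mem_ker.mp hx, Polynomial.eval_zero] at hx₀
    rw [Ideal.under, Ideal.mem_comap, RingHom.mem_ker, ho, hx₀]
    simp
  obtain ⟨P, hPω, hP, hPl⟩ := Ideal.exists_ideal_le_liesOver_of_le (RingHom.ker ω) hle
  obtain ⟨ψ, hψ, rfl⟩ := exists_algHom_powerSeries_ker_eq (restrictToLine_surjective hoc) ω hPω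
  refine ⟨ψ, hψ, fun h => hcG ?_⟩
  rw [← RingHom.mem_ker, hPl.over]
  exact (RingHom.ker ψ).mem_of_dvd hGg h

lemma exists_algHom_powerSeries_of_finiteType [Algebra.FiniteType k R] (ω : R →ₐ[k] k) {g : R}
    (hg : ∀ s n, s * g ^ n = 0 → ω s = 0) :
    ∃ ψ : R →ₐ[k] PowerSeries k, (∀ r, PowerSeries.constantCoeff (ψ r) = ω r) ∧ ψ g ≠ 0 := by
  by_cases hωg : ω g = 0
  swap
  · exact ⟨(Algebra.ofId k (PowerSeries k)).comp ω, fun r => PowerSeries.constantCoeff_C _,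
      ((algebraMap k (PowerSeries k)).injective.ne_iff' (map_zero _)).mpr hωg⟩
  have hprime : (RingHom.ker ω).IsPrime := RingHom.ker_isPrime _
  obtain ⟨P, hP, -, hdisj⟩ := Ideal.exists_le_prime_disjoint ⊥
    ((RingHom.ker ω).primeCompl ⊔ Submonoid.powers g) <| Set.disjoint_left.mpr fun x hx hx' => by
      obtain ⟨s, hs, _, ⟨n, rfl⟩, rfl⟩ := Submonoid.mem_sup.mp hx'
      exact hs (hg s n hx)
  rw [Set.disjoint_left] at hdisj
  have hgP : Ideal.Quotient.mk P g ≠ 0 := fun h =>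
    hdisj (Ideal.Quotient.eq_zero_iff_mem.mp h) (Submonoid.mem_sup_right (Submonoid.mem_powers g))
  have hPω : P ≤ RingHom.ker ω := fun x hx => by
    by_contra hxω
    exact hdisj hx (Submonoid.mem_sup_left hxω)
  obtain ⟨ψ, hψ, hψg⟩ :=
    exists_algHom_powerSeries_of_isDomain (Ideal.Quotient.liftₐ P ω hPω) hgP hωg
  exact ⟨ψ.comp (Ideal.Quotient.mkₐ k P), fun r => hψ _, hψg⟩

/-- Curve selection: the condition on `g` says that the point `ω` lies in the closure of the locus
`g ≠ 0`. -/
theorem exists_algHom_powerSeries_of_essFiniteType [Algebra.EssFiniteType k R] (ω : R →ₐ[k] k)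
    {g : R} (hg : ∀ s n, s * g ^ n = 0 → ω s = 0) :
    ∃ ψ : R →ₐ[k] PowerSeries k, (∀ r, PowerSeries.constantCoeff (ψ r) = ω r) ∧ ψ g ≠ 0 := by
  let R₀ := Algebra.EssFiniteType.subalgebra k R
  let M := Algebra.EssFiniteType.submonoid k R
  have hloc : IsLocalization M R := Algebra.EssFiniteType.isLocalization k R
  obtain ⟨⟨g₀, s⟩, hgs⟩ := IsLocalization.surj M g
  dsimp only at hgs
  obtain ⟨ψ₀, hψ₀, hψ₀g⟩ := exists_algHom_powerSeries_of_finiteType (ω.comp R₀.val) (g := g₀)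
    fun t n htn => by
      refine hg t n (((IsLocalization.map_units R s).pow n).mul_left_eq_zero.mp ?_)
      rw [mul_assoc, ← mul_pow, hgs]
      simpa using congrArg (algebraMap R₀ R) htn
  have hunit (y : M) : IsUnit (ψ₀ y) := by
    rw [PowerSeries.isUnit_iff_constantCoeff, hψ₀]
    exact (IsLocalization.map_units R y).map ω
  let ψ : R →ₐ[k] PowerSeries k := IsLocalization.liftAlgHom (M := M) (f := ψ₀) hunit
  have hψ (r : R₀) : ψ (algebraMap R₀ R r) = ψ₀ r := IsLocalization.lift_eq _ r
  have hψω : PowerSeries.constantCoeff.comp ψ.toRingHom = ω.toRingHom :=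
    IsLocalization.ringHom_ext M <| RingHom.ext fun x =>
      (congrArg PowerSeries.constantCoeff (hψ x)).trans (hψ₀ x)
  refine ⟨ψ, RingHom.congr_fun hψω, fun h => hψ₀g ?_⟩
  rw [← hψ, ← hgs, map_mul, h, zero_mul]

end CurveSelection

section Nullstellensatz

section CommRing

variable {k A : Type*} [CommRing k] [CommRing A] [Algebra k A] {π : A →ₐ[k] k}

lemma algebraMap_eq_algebraMap_apply {R : Type*} [CommRing R] [Algebra k R] [Algebra A R]
    [IsScalarTower k A R] (hπ : ∀ a ∈ RingHom.ker π, algebraMap A R a = 0) (a : A) :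
    algebraMap A R a = algebraMap k R (π a) := by
  have h := hπ (a - algebraMap k A (π a)) (by simp [RingHom.mem_ker])
  rwa [map_sub, ← IsScalarTower.algebraMap_apply, sub_eq_zero] at h

lemma finiteType_of_forall_mem_ker {R : Type*} [CommRing R] [Algebra k R] [Algebra A R]
    [IsScalarTower k A R] [Algebra.FiniteType A R]
    (hπ : ∀ a ∈ RingHom.ker π, algebraMap A R a = 0) : Algebra.FiniteType k R := by
  have hcomp : (algebraMap k R).comp π.toRingHom = algebraMap A R :=
    RingHom.ext fun a => (algebraMap_eq_algebraMap_apply hπ a).symm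
  rw [← RingHom.finiteType_algebraMap]
  refine RingHom.FiniteType.of_comp_finiteType (f := π.toRingHom) ?_
  rw [hcomp]
  exact RingHom.finiteType_algebraMap.mpr ‹_›

end CommRing

variable {k A : Type*} [Field k] [CommRing A] [Algebra k A] {π : A →ₐ[k] k}

/-- Nullstellensatz over the point `π`: the ideal `I` vanishes where `x` is invertible, so only the
fiber over `π` matters. -/
theorem isNilpotent_of_forall_algHom [IsAlgClosed k] {I : Ideal A} (hI : RingHom.ker π ≤ I.radical)
    {R : Type*} [CommRing R] [Algebra k R] [Algebra A R] [IsScalarTower k A R]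
    [Algebra.FiniteType A R] {x : R} (hx : ∀ g ∈ I, g • x = 0)
    (hω : ∀ ω : R →ₐ[k] k, (∀ a, ω (algebraMap A R a) = π a) → ω x = 0) : IsNilpotent x := by
  by_contra hnil
  let L := Localization.Away x
  have hL : Nontrivial L := by
    rwa [← not_subsingleton_iff_nontrivial,
      IsLocalization.subsingleton_iff (M := Submonoid.powers x)]
  obtain ⟨M, hM⟩ := Ideal.exists_maximal L
  let : Field (L ⧸ M) := Ideal.Quotient.field M
  have hxL : IsUnit (algebraMap R (L ⧸ M) x) := by
    rw [IsScalarTower.algebraMap_apply R L]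
    exact (IsLocalization.Away.algebraMap_isUnit x).map _
  have hπ : ∀ a ∈ RingHom.ker π, algebraMap A (L ⧸ M) a = 0 := fun a ha => by
    obtain ⟨n, hn⟩ := hI ha
    have h := congrArg (algebraMap R (L ⧸ M)) (hx _ hn)
    rw [Algebra.smul_def, map_mul, map_zero, ← IsScalarTower.algebraMap_apply,
      hxL.mul_left_eq_zero, map_pow] at h
    exact eq_zero_of_pow_eq_zero h
  have hftL : Algebra.FiniteType R L := IsLocalization.finiteType_of_monoid_fg (.powers x) L
  have hftA : Algebra.FiniteType A (L ⧸ M) :=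
    .trans (S := R) ‹_› (.trans (S := L) hftL inferInstance)
  have hftk : Algebra.FiniteType k (L ⧸ M) := finiteType_of_forall_mem_ker hπ
  have hfin : Module.Finite k (L ⧸ M) := finite_of_finite_type_of_isJacobsonRing k _
  let e : k ≃ₐ[k] L ⧸ M := AlgEquiv.ofBijective (Algebra.ofId k _)
    IsAlgClosed.algebraMap_bijective_of_isIntegral
  refine (hxL.map e.symm).ne_zero
    (hω (e.symm.toAlgHom.comp (IsScalarTower.toAlgHom k R (L ⧸ M))) fun a => ?_)
  change e.symm (algebraMap R (L ⧸ M) (algebraMap A R a)) = π a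
  rw [← IsScalarTower.algebraMap_apply, algebraMap_eq_algebraMap_apply hπ, e.symm.commutes]
  rfl

theorem exists_pow_mem_of_forall_algHom [IsAlgClosed k] {I : Ideal A}
    (hI : RingHom.ker π ≤ I.radical) {R : Type*} [CommRing R] [Algebra k R] [Algebra A R]
    [IsScalarTower k A R] [Algebra.FiniteType A R] {E : Ideal R} {x : R}
    (hx : ∀ g ∈ I, g • x ∈ E)
    (hω : ∀ ω : R →ₐ[k] k, (∀ a, ω (algebraMap A R a) = π a) → (∀ y ∈ E, ω y = 0) → ω x = 0) :
    ∃ n, x ^ n ∈ E := by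
  have hnil : IsNilpotent (Ideal.Quotient.mk E x) :=
    isNilpotent_of_forall_algHom hI (fun g hg => Ideal.Quotient.eq_zero_iff_mem.mpr (hx g hg))
      fun ω h => hω (ω.comp (Ideal.Quotient.mkₐ k E)) h fun y hy =>
        (congrArg ω (Ideal.Quotient.eq_zero_iff_mem.mpr hy)).trans (map_zero ω)
  obtain ⟨n, hn⟩ := hnil
  exact ⟨n, Ideal.Quotient.eq_zero_iff_mem.mp hn⟩

theorem isNilpotent_tmul_sub_of_forall_algHom [IsAlgClosed k] {I : Ideal A}
    (hI : RingHom.ker π ≤ I.radical) {S R : Type*} [CommRing S] [CommRing R] [Algebra k S]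
    [Algebra A S] [Algebra k R] [Algebra A R] [Algebra S R] [IsScalarTower k A R]
    [IsScalarTower k S R] [IsScalarTower A S R] [Algebra.FiniteType A R] {x : R}
    (hx : ∀ g ∈ I, ∃ s : S, g • x = algebraMap S R s)
    (hω : ∀ ω₁ ω₂ : R →ₐ[k] k, (∀ a, ω₁ (algebraMap A R a) = π a) →
      (∀ a, ω₂ (algebraMap A R a) = π a) →
      (∀ s, ω₁ (algebraMap S R s) = ω₂ (algebraMap S R s)) → ω₁ x = ω₂ x) :
    IsNilpotent (x ⊗ₜ[S] (1 : R) - 1 ⊗ₜ x) := by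
  have : Algebra.FiniteType S R := .of_restrictScalars_finiteType A S R
  have : Algebra.FiniteType A (R ⊗[S] R) := .trans (S := R) inferInstance inferInstance
  refine isNilpotent_of_forall_algHom hI (fun g hg => ?_) fun ω hπ => ?_
  · obtain ⟨s, hs⟩ := hx g hg
    rw [smul_sub, TensorProduct.smul_tmul', ← TensorProduct.tmul_smul, hs,
      Algebra.TensorProduct.tmul_one_eq_one_tmul, sub_self]
  let j₁ : R →ₐ[k] R ⊗[S] R := Algebra.TensorProduct.includeLeft
  let j₂ : R →ₐ[k] R ⊗[S] R := Algebra.TensorProduct.includeRight.restrictScalars k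
  have hS (s : S) : j₁ (algebraMap S R s) = j₂ (algebraMap S R s) :=
    Algebra.TensorProduct.tmul_one_eq_one_tmul s
  rw [map_sub, sub_eq_zero]
  refine hω (ω.comp j₁) (ω.comp j₂) hπ (fun a => ?_) fun s => congrArg ω (hS s)
  rw [AlgHom.comp_apply, IsScalarTower.algebraMap_apply A S R, ← hS,
    ← IsScalarTower.algebraMap_apply]
  exact hπ a

theorem exists_aeval_appellPoly_eq_zero_of_forall_algHom [IsAlgClosed k] [CharZero k]
    {I : Ideal A} (hI : RingHom.ker π ≤ I.radical) {S R : Type*} [CommRing S] [CommRing R]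
    [Algebra k S] [Algebra A S] [Algebra k R] [Algebra A R] [Algebra S R] [IsScalarTower k A R]
    [IsScalarTower k S R] [IsScalarTower A S R] [Algebra.FiniteType A R] [IsNoetherianRing S]
    [FaithfulSMul S R] [Module.Finite S R] {x : R}
    (hsurj : Function.Surjective (Polynomial.aeval x : Polynomial S →ₐ[S] R))
    (hx : ∀ g ∈ I, ∃ s : S, g • x = algebraMap S R s)
    (hω : ∀ ω₁ ω₂ : R →ₐ[k] k, (∀ a, ω₁ (algebraMap A R a) = π a) →
      (∀ a, ω₂ (algebraMap A R a) = π a) →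
      (∀ s, ω₁ (algebraMap S R s) = ω₂ (algebraMap S R s)) → ω₁ x = ω₂ x) :
    ∃ (q : ℕ) (a : ℕ → S), a 0 = 1 ∧ ∀ n ≥ q, Polynomial.aeval x (appellPoly a n) = 0 :=
  let : Algebra ℚ S := Algebra.compHom S (algebraMap ℚ k)
  exists_aeval_appellPoly_eq_zero hsurj (isNilpotent_tmul_sub_of_forall_algHom hI hx hω)

end Nullstellensatz

section RelativeClosure

/-- A power series point of `Spec A` whose closed point is `π`. -/
def IsArcAt {k A : Type*} [CommRing k] [CommRing A] [Algebra k A] (π : A →ₐ[k] k)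
    (φ : A →ₐ[k] PowerSeries k) : Prop :=
  ∀ a, PowerSeries.constantCoeff (φ a) = π a

/-- The elements that satisfy the valuative criterion: pairs of arcs at `π` play the role of the
homomorphisms `ρ` on `A ⊗[k] A`. -/
def relativeClosure {k A : Type*} [CommRing k] [CommRing A] [Algebra k A] (π : A →ₐ[k] k)
    (I : Ideal A) : Set A :=
  {h | ∀ φ₁ φ₂ : A →ₐ[k] PowerSeries k, IsArcAt π φ₁ → IsArcAt π φ₂ →
    (φ₁ h, φ₂ h) ∈ relativeModule I φ₁ φ₂}

end RelativeClosure

section ReesAlgebra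

open Polynomial

/-- The algebra `A[It, ht]` over the Rees algebra `A[It]`. -/
noncomputable def reesAdjoin {A : Type*} [CommRing A] (I : Ideal A) (h : A) :
    Subalgebra (reesAlgebra I) A[X] :=
  Algebra.adjoin (reesAlgebra I) {monomial 1 h}

/-- The element `gt` of the Rees algebra, for `g ∈ I`. -/
noncomputable def reesMonomial {A : Type*} [CommRing A] {I : Ideal A} (g : I) : reesAlgebra I :=
  ⟨monomial 1 g, reesAlgebra.monomial_mem.mpr (by simp)⟩

namespace reesAdjoin

/-- The element `ht` of `A[It, ht]`. -/
noncomputable def gen {A : Type*} [CommRing A] (I : Ideal A) (h : A) : reesAdjoin I h :=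
  ⟨monomial 1 h, Algebra.self_mem_adjoin_singleton _ _⟩

/-- The element `gt` of `A[It, ht]`, for `g ∈ I`. -/
noncomputable def degreeOne {A : Type*} [CommRing A] {I : Ideal A} (h : A) (g : I) :
    reesAdjoin I h :=
  algebraMap (reesAlgebra I) (reesAdjoin I h) (reesMonomial g)

variable {A : Type*} [CommRing A] {I : Ideal A} {h : A}

lemma coe_gen : (gen I h : A[X]) = monomial 1 h := rfl

lemma coe_degreeOne (g : I) : (degreeOne h g : A[X]) = monomial 1 (g : A) := rfl

lemma aeval_gen_surjective :
    Function.Surjective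
      (aeval (gen I h) : (reesAlgebra I)[X] →ₐ[reesAlgebra I] reesAdjoin I h) := by
  rintro ⟨x, hx⟩
  obtain ⟨f, hf⟩ := (Algebra.adjoin_singleton_eq_range_aeval _ _).le hx
  exact ⟨f, Subtype.ext ((aeval_subalgebra_coe f _ _).trans hf)⟩

instance [IsNoetherianRing A] : Algebra.FiniteType A (reesAdjoin I h) :=
  .trans (S := reesAlgebra I) inferInstance (.of_surjective (aeval (gen I h)) aeval_gen_surjective)

instance : FaithfulSMul (reesAlgebra I) (reesAdjoin I h) :=
  (faithfulSMul_iff_algebraMap_injective _ _).mpr fun _ _ hst =>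
    Subtype.ext (congrArg (fun b : reesAdjoin I h => (b : A[X])) hst)

lemma algebraMap_mul_eq {g g' : A} {u u' : reesAdjoin I h}
    (hu : (u : A[X]) = monomial 1 g) (hu' : (u' : A[X]) = monomial 1 g') :
    algebraMap A (reesAdjoin I h) g * u' = algebraMap A (reesAdjoin I h) g' * u := by
  refine Subtype.ext ?_
  change C g * (u' : A[X]) = C g' * (u : A[X])
  rw [hu, hu', C_mul_monomial, C_mul_monomial, mul_comm]

lemma smul_gen (g : I) : (g : A) • gen I h = h • degreeOne h g := by
  rw [Algebra.smul_def, Algebra.smul_def]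
  exact algebraMap_mul_eq (coe_degreeOne g) coe_gen

lemma mul_pow_eq_zero_of_monomial {g : A} {u s : reesAdjoin I h} {n : ℕ}
    (hu : (u : A[X]) = monomial 1 g) (hs : s * algebraMap A (reesAdjoin I h) g ^ n = 0) :
    s * u ^ n = 0 := by
  refine Subtype.ext ?_
  have hs' : (s : A[X]) * C g ^ n = 0 := congrArg Subtype.val hs
  change (s : A[X]) * (u : A[X]) ^ n = 0
  rw [hu, ← C_mul_X_eq_monomial, mul_pow, ← mul_assoc, hs', zero_mul]

section Integrality

/-- The homogeneous component of degree `n` of an element of the ideal generated by the `gt` only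
involves powers of `ht` below the `n`-th. -/
lemma monomial_coeff_mul_mem (g : I) (n : ℕ) (f : (reesAlgebra I)[X]) :
    monomial n ((aeval (monomial 1 h : A[X]) f * monomial 1 (g : A)).coeff n) ∈
      (degreeLT (reesAlgebra I) n).map (aeval (monomial 1 h : A[X])).toLinearMap := by
  induction f using Polynomial.induction_on' with
  | add f f' hf hf' =>
    rw [map_add, add_mul, coeff_add, map_add]
    exact add_mem hf hf'
  | monomial j s =>
    have hs : aeval (monomial 1 h : A[X]) (monomial j s) * monomial 1 (g : A) =
        s * monomial (j + 1) (h ^ j * g) := by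
      rw [aeval_monomial, monomial_pow, one_mul, mul_assoc, monomial_mul_monomial]
      rfl
    rw [hs, ← C_mul_X_pow_eq_monomial (n := j + 1), ← mul_assoc, coeff_mul_X_pow', coeff_mul_C]
    split_ifs with hj
    · have hmem : monomial (n - j) ((s : A[X]).coeff (n - (j + 1)) * g) ∈ reesAlgebra I := by
        rw [reesAlgebra.monomial_mem, show n - j = n - (j + 1) + 1 by omega, pow_succ]
        exact Ideal.mul_mem_mul ((mem_reesAlgebra_iff I _).mp s.2 _) g.2
      refine ⟨monomial j ⟨_, hmem⟩, ?_, ?_⟩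
      · exact mem_degreeLT.mpr ((degree_monomial_le _ _).trans_lt (by exact_mod_cast hj))
      · change aeval _ _ = _
        rw [aeval_monomial, monomial_pow, one_mul]
        change monomial (n - j) _ * _ = _
        rw [monomial_mul_monomial, Nat.sub_add_cancel (by omega)]
        ring_nf
    · rw [monomial_zero_right]
      exact zero_mem _

lemma isIntegral_monomial_of_gen_pow_mem_span {n : ℕ}
    (hn : gen I h ^ n ∈ Ideal.span (Set.range (degreeOne (I := I) h))) :
    IsIntegral (reesAlgebra I) (monomial 1 h : A[X]) := by
  have hcomp : ∀ y ∈ Ideal.span (Set.range (degreeOne (I := I) h)), ∀ z : reesAdjoin I h,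
      monomial n (((z * y : reesAdjoin I h) : A[X]).coeff n) ∈
        (degreeLT (reesAlgebra I) n).map (aeval (monomial 1 h : A[X])).toLinearMap := by
    intro y hy
    induction hy using Submodule.span_induction with
    | mem y hy =>
      obtain ⟨g, rfl⟩ := hy
      intro z
      obtain ⟨f, rfl⟩ := aeval_gen_surjective z
      rw [MulMemClass.coe_mul, aeval_subalgebra_coe]
      exact monomial_coeff_mul_mem g n f
    | zero => simp
    | add x y _ _ hx hy =>
      intro z
      rw [mul_add, AddMemClass.coe_add, coeff_add, map_add]
      exact add_mem (hx z) (hy z)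
    | smul a y _ hy =>
      intro z
      rw [smul_eq_mul, ← mul_assoc]
      exact hy (z * a)
  obtain ⟨f, hf, hfn⟩ := hcomp _ hn 1
  refine ⟨X ^ n - f, monic_X_pow_sub (mem_degreeLT.mp hf), ?_⟩
  rw [← aeval_def, map_sub, sub_eq_zero, aeval_X_pow]
  refine Eq.trans ?_ hfn.symm
  rw [one_mul, SubmonoidClass.coe_pow, coe_gen, monomial_pow, one_mul, coeff_monomial_same]

end Integrality

section Points

variable {k : Type*} [Field k] [IsAlgClosed k] [CharZero k] [Algebra k A]
  [Algebra.EssFiniteType k A] {π : A →ₐ[k] k}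

/-- The power series `p` is the equation of the exceptional divisor along the arc `φ`. -/
lemma exists_arc (ω : reesAdjoin I h →ₐ[k] k) {g₀ : A} {u₀ : reesAdjoin I h}
    (hu₀ : (u₀ : A[X]) = monomial 1 g₀) (hωu₀ : ω u₀ ≠ 0) :
    ∃ φ : reesAdjoin I h →ₐ[k] PowerSeries k, (∀ b, PowerSeries.constantCoeff (φ b) = ω b) ∧
      ∃ p ≠ 0, ∀ (g : A) (u : reesAdjoin I h), (u : A[X]) = monomial 1 g →
        φ (algebraMap A (reesAdjoin I h) g) = p * φ u := by
  have : IsNoetherianRing A := Algebra.EssFiniteType.isNoetherianRing k A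
  have : Algebra.EssFiniteType k (reesAdjoin I h) := .comp k A _
  obtain ⟨φ, hφ, hφg⟩ := exists_algHom_powerSeries_of_essFiniteType ω
    (g := algebraMap A (reesAdjoin I h) g₀) fun s n hsn => by
      have h0 := congrArg ω (mul_pow_eq_zero_of_monomial hu₀ hsn)
      rw [map_mul, map_pow, map_zero] at h0
      exact (mul_eq_zero.mp h0).resolve_right (pow_ne_zero n hωu₀)
  obtain ⟨v, hv⟩ : IsUnit (φ u₀) := by
    rw [PowerSeries.isUnit_iff_constantCoeff, hφ]
    exact hωu₀.isUnit
  refine ⟨φ, hφ, φ (algebraMap A _ g₀) * ↑v⁻¹, mul_ne_zero hφg v⁻¹.ne_zero, fun g u hu => ?_⟩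
  have hgu := congrArg φ (algebraMap_mul_eq hu hu₀)
  rw [map_mul, map_mul, ← hv] at hgu
  rw [mul_right_comm, ← hgu, Units.mul_inv_cancel_right]

variable (hh : h ∈ relativeClosure π I)

include hh

lemma apply_gen_eq_zero (ω : reesAdjoin I h →ₐ[k] k)
    (hω : ∀ a, ω (algebraMap A (reesAdjoin I h) a) = π a)
    (hωI : ∀ g : I, ω (degreeOne h g) = 0) : ω (gen I h) = 0 := by
  by_contra hne
  obtain ⟨φ, hφ, p, hp, harc⟩ := exists_arc ω coe_gen hne
  let φA : A →ₐ[k] PowerSeries k := φ.comp (IsScalarTower.toAlgHom k A (reesAdjoin I h))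
  have hφA : IsArcAt π φA := fun a => (hφ _).trans (hω a)
  have hle : I.map φA ≤ Ideal.span {p * PowerSeries.X} := by
    refine Ideal.map_le_iff_le_comap.mpr fun g hg => Ideal.mem_span_singleton.mpr ?_
    have hX : PowerSeries.X ∣ φ (degreeOne h ⟨g, hg⟩) := by
      rw [PowerSeries.X_dvd_iff, hφ, hωI]
    exact (harc g _ (coe_degreeOne ⟨g, hg⟩)).symm ▸ mul_dvd_mul_left p hX
  have hmem := Ideal.mem_span_singleton.mp (hle (relativeModule_le_prod (hh φA φA hφA hφA)).1)
  have hmem' : p * PowerSeries.X ∣ p * φ (gen I h) := harc h _ coe_gen ▸ hmem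
  rw [mul_dvd_mul_iff_left hp, PowerSeries.X_dvd_iff, hφ] at hmem'
  exact hne hmem'

lemma apply_gen_eq_apply_gen (ω₁ ω₂ : reesAdjoin I h →ₐ[k] k)
    (hω₁ : ∀ a, ω₁ (algebraMap A (reesAdjoin I h) a) = π a)
    (hω₂ : ∀ a, ω₂ (algebraMap A (reesAdjoin I h) a) = π a)
    (hωI : ∀ g : I, ω₁ (degreeOne h g) = ω₂ (degreeOne h g)) :
    ω₁ (gen I h) = ω₂ (gen I h) := by
  by_cases hzero : ∀ g : I, ω₁ (degreeOne h g) = 0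
  · rw [apply_gen_eq_zero hh ω₁ hω₁ hzero,
      apply_gen_eq_zero hh ω₂ hω₂ fun g => (hωI g).symm.trans (hzero g)]
  push Not at hzero
  obtain ⟨g₀, hg₀⟩ := hzero
  obtain ⟨φ₁, hφ₁, p₁, hp₁, harc₁⟩ := exists_arc ω₁ (coe_degreeOne g₀) hg₀
  obtain ⟨φ₂, hφ₂, p₂, hp₂, harc₂⟩ := exists_arc ω₂ (coe_degreeOne g₀) (hωI g₀ ▸ hg₀)
  let ι := IsScalarTower.toAlgHom k A (reesAdjoin I h)
  have hmem := hh (φ₁.comp ι) (φ₂.comp ι) (fun a => (hφ₁ _).trans (hω₁ a))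
    (fun a => (hφ₂ _).trans (hω₂ a))
  obtain ⟨y₁, y₂, hy, hpy⟩ := relativeModule_le_congruenceModule (p₁ := p₁) (p₂ := p₂)
    (fun g hg => ⟨_, _, (hφ₁ _).trans ((hωI ⟨g, hg⟩).trans (hφ₂ _).symm),
      Prod.ext (harc₁ g _ (coe_degreeOne ⟨g, hg⟩)) (harc₂ g _ (coe_degreeOne ⟨g, hg⟩))⟩) hmem
  have h₁ : φ₁ (gen I h) = y₁ :=
    mul_left_cancel₀ hp₁ ((harc₁ h _ coe_gen).symm.trans (congrArg Prod.fst hpy))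
  have h₂ : φ₂ (gen I h) = y₂ :=
    mul_left_cancel₀ hp₂ ((harc₂ h _ coe_gen).symm.trans (congrArg Prod.snd hpy))
  rw [← hφ₁, ← hφ₂, h₁, h₂, hy]

variable (hI : RingHom.ker π ≤ I.radical)

include hI

lemma exists_gen_pow_mem_span :
    ∃ n, gen I h ^ n ∈ Ideal.span (Set.range (degreeOne (I := I) h)) := by
  have : IsNoetherianRing A := Algebra.EssFiniteType.isNoetherianRing k A
  have hspan (g : I) : degreeOne h g ∈ Ideal.span (Set.range (degreeOne h)) :=
    Ideal.subset_span ⟨g, rfl⟩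
  refine exists_pow_mem_of_forall_algHom hI (x := gen I h) (fun g hg => ?_) fun ω hω hωE =>
    apply_gen_eq_zero hh ω hω fun g => hωE _ (hspan g)
  rw [smul_gen ⟨g, hg⟩, Algebra.smul_def]
  exact Ideal.mul_mem_left _ _ (hspan _)

lemma finite_of_mem_relativeClosure : Module.Finite (reesAlgebra I) (reesAdjoin I h) := by
  obtain ⟨n, hn⟩ := exists_gen_pow_mem_span hh hI
  exact Algebra.finite_adjoin_simple_of_isIntegral (isIntegral_monomial_of_gen_pow_mem_span hn)

lemma exists_aeval_gen_appellPoly_eq_zero :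
    ∃ (q : ℕ) (a : ℕ → reesAlgebra I), a 0 = 1 ∧
      ∀ n ≥ q, aeval (gen I h) (appellPoly a n) = 0 := by
  have : IsNoetherianRing A := Algebra.EssFiniteType.isNoetherianRing k A
  have : Module.Finite (reesAlgebra I) (reesAdjoin I h) := finite_of_mem_relativeClosure hh hI
  have hsmul (g : A) (hg : g ∈ I) : ∃ s : reesAlgebra I,
      g • gen I h = algebraMap (reesAlgebra I) (reesAdjoin I h) s :=
    ⟨h • reesMonomial ⟨g, hg⟩, smul_gen ⟨g, hg⟩⟩
  exact exists_aeval_appellPoly_eq_zero_of_forall_algHom hI (S := reesAlgebra I) (x := gen I h)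
    (aeval_gen_surjective (I := I) (h := h)) hsmul fun ω₁ ω₂ hω₁ hω₂ hS =>
      apply_gen_eq_apply_gen hh ω₁ ω₂ hω₁ hω₂ fun g => hS (reesMonomial g)

end Points

end reesAdjoin

end ReesAlgebra

section Criterion

open Polynomial

lemma coeff_aeval_monomial_appellPoly {A : Type*} [CommRing A] {I : Ideal A}
    (a : ℕ → reesAlgebra I) (h : A) (n : ℕ) :
    (aeval (monomial 1 h : A[X]) (appellPoly a n)).coeff n =
      (appellPoly (fun i => (a i : A[X]).coeff i) n).eval h := by
  have haeval : aeval (monomial 1 h : A[X]) (appellPoly a n) =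
      (appellPoly (fun i => (a i : A[X])) n).eval (monomial 1 h) := by
    rw [aeval_def, ← eval_map, map_appellPoly]
    rfl
  rw [haeval, eval_appellPoly, eval_appellPoly, finsetSum_coeff]
  refine Finset.sum_congr rfl fun i hi => ?_
  obtain ⟨j, rfl⟩ := Nat.exists_eq_add_of_le (Finset.mem_range_succ_iff.mp hi)
  rw [monomial_pow, one_mul, Nat.add_sub_cancel_left, coeff_mul_monomial, coeff_natCast_mul]

variable {k A : Type*} [Field k] [IsAlgClosed k] [CharZero k] [CommRing A] [Algebra k A]
  [Algebra.EssFiniteType k A] {π : A →ₐ[k] k} {I : Ideal A} {h : A}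

lemma wSubIdeal_of_mem_relativeClosure (hI : RingHom.ker π ≤ I.radical)
    (hh : h ∈ relativeClosure π I) : WSubIdeal I h := by
  obtain ⟨q, a, ha₀, ha⟩ := reesAdjoin.exists_aeval_gen_appellPoly_eq_zero hh hI
  refine wSubIdeal_iff_exists_isAppellRoot.mpr ⟨q, fun i => (a i : A[X]).coeff i, by simp [ha₀],
    fun i => (mem_reesAlgebra_iff I _).mp (a i).2 i, fun n hqn _ => ?_⟩
  have hn := congrArg Subtype.val (ha n (by omega))
  rw [aeval_subalgebra_coe, reesAdjoin.coe_gen] at hn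
  rw [IsRoot, ← coeff_aeval_monomial_appellPoly, hn]
  rfl

theorem wSubIdeal_iff_mem_relativeClosure (hI : RingHom.ker π ≤ I.radical) :
    WSubIdeal I h ↔ h ∈ relativeClosure π I :=
  ⟨fun hh φ₁ φ₂ _ _ => mk_mem_relativeModule_of_wSubIdeal hh φ₁.toRingHom φ₂.toRingHom,
    wSubIdeal_of_mem_relativeClosure hI⟩

end Criterion

section TensorProduct

open Algebra.TensorProduct PowerSeries

lemma isArcAt_iff_forall_mem_ker {k A : Type*} [CommRing k] [CommRing A] [Algebra k A]
    {π : A →ₐ[k] k} {φ : A →ₐ[k] k⟦X⟧} :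
    IsArcAt π φ ↔ ∀ a ∈ RingHom.ker π, φ a ∈ Ideal.span {(X : k⟦X⟧)} := by
  simp only [Ideal.mem_span_singleton, X_dvd_iff]
  refine ⟨fun hφ a ha => (hφ a).trans ha, fun hφ a => ?_⟩
  have h := hφ (a - algebraMap k A (π a)) (by simp [RingHom.mem_ker])
  rwa [map_sub, map_sub, AlgHom.commutes, sub_eq_zero] at h

lemma mem_relativeClosure_iff_forall_tensorProduct {k A : Type*} [CommRing k] [CommRing A]
    [Algebra k A] {π : A →ₐ[k] k} {I : Ideal A} {h : A} :
    h ∈ relativeClosure π I ↔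
      ∀ ρ : A ⊗[k] A →ₐ[k] k⟦X⟧,
        (∀ a ∈ RingHom.ker π, ρ (includeLeft (S := k) a) ∈ Ideal.span {(X : k⟦X⟧)} ∧
          ρ (includeRight (R := k) a) ∈ Ideal.span {(X : k⟦X⟧)}) →
        (ρ (includeLeft (S := k) h), ρ (includeRight (R := k) h)) ∈
          relativeModule I (ρ.comp includeLeft) (ρ.comp includeRight) := by
  constructor
  · exact fun hh ρ hρ => hh _ _ (isArcAt_iff_forall_mem_ker.mpr fun a ha => (hρ a ha).1)
      (isArcAt_iff_forall_mem_ker.mpr fun a ha => (hρ a ha).2)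
  · intro hh φ₁ φ₂ h₁ h₂
    have hρ := hh (productMap φ₁ φ₂)
    rw [productMap_left, productMap_right] at hρ
    simpa using hρ fun a ha => by
      simpa using ⟨isArcAt_iff_forall_mem_ker.mp h₁ a ha, isArcAt_iff_forall_mem_ker.mp h₂ a ha⟩

theorem weakSubintegral_iff_relativeClosure_general {k A : Type*} [Field k] [IsAlgClosed k]
    [CharZero k] [CommRing A] [Algebra k A] [Algebra.EssFiniteType k A] (π : A →ₐ[k] k)
    {I : Ideal A} (hI : RingHom.ker π ≤ I.radical) (h : A) :
    WSubIdeal I h ↔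
      ∀ ρ : A ⊗[k] A →ₐ[k] k⟦X⟧,
        (∀ a ∈ RingHom.ker π, ρ (includeLeft (S := k) a) ∈ Ideal.span {(X : k⟦X⟧)} ∧
          ρ (includeRight (R := k) a) ∈ Ideal.span {(X : k⟦X⟧)}) →
        (ρ (includeLeft (S := k) h), ρ (includeRight (R := k) h)) ∈
          relativeModule I (ρ.comp includeLeft) (ρ.comp includeRight) :=
  (wSubIdeal_iff_mem_relativeClosure hI).trans mem_relativeClosure_iff_forall_tensorProduct

end TensorProduct

open IsLocalRing in
lemma exists_algHom_ker_eq_maximalIdeal {k A : Type*} [Field k] [CommRing A] [IsLocalRing A]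
    [Algebra k A] (hres : ∀ x : A, ∃ c : k, x - algebraMap k A c ∈ maximalIdeal A) :
    ∃ π : A →ₐ[k] k, RingHom.ker π = maximalIdeal A := by
  have hsurj : Function.Surjective (algebraMap k (ResidueField A)) := fun y => by
    obtain ⟨x, rfl⟩ := residue_surjective y
    obtain ⟨c, hc⟩ := hres x
    refine ⟨c, ?_⟩
    rw [IsScalarTower.algebraMap_apply k A (ResidueField A), eq_comm, ← sub_eq_zero]
    exact (residue_eq_zero_iff _).mpr hc
  let e : k ≃ₐ[k] ResidueField A :=
    AlgEquiv.ofBijective (Algebra.ofId k _) ⟨(algebraMap k (ResidueField A)).injective, hsurj⟩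
  refine ⟨e.symm.toAlgHom.comp (IsScalarTower.toAlgHom k A (ResidueField A)), ?_⟩
  ext a
  exact e.symm.map_eq_zero_iff.trans (residue_eq_zero_iff a)

/-- Theorem 5.11, algebraic valuative criterion for weak subintegral
closure: let `k` be an algebraically closed field of characteristic 0, `(A,m,k)` the local
ring of an algebraic variety over `k`, `I` an `m`-primary ideal and `h ∈ A`.  Set
`B = A ⊗_k A`.  Then `h ∈ *I` iff for every local `k`-algebra homomorphism
`ρ : B → k[[z]]`, the vector `(ρ(h⊗1), ρ(1⊗h))` lies in `M_ρ + z·N_ρ`, where `M_ρ` is the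
`k[[z]]`-submodule of `k[[z]]²` spanned by the `(ρ(g⊗1), ρ(1⊗g))` for `g ∈ I`, and `N_ρ`
that spanned by the `(ρ(g⊗1), 0)` and `(0, ρ(1⊗g))` for `g ∈ I`. -/
theorem weakSubintegral_iff_relativeClosure {k A : Type*} [Field k] [IsAlgClosed k]
    [CharZero k] [CommRing A] [IsReduced A] [IsNoetherianRing A] [IsLocalRing A]
    [Algebra k A] [Algebra.EssFiniteType k A]
    (hres : ∀ x : A, ∃ c : k, x - algebraMap k A c ∈ IsLocalRing.maximalIdeal A)
    (I : Ideal A) (hIm : I.radical = IsLocalRing.maximalIdeal A) (h : A) :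
    WSubIdeal I h ↔
      ∀ ρ : (A ⊗[k] A) →ₐ[k] PowerSeries k,
        (∀ a ∈ IsLocalRing.maximalIdeal A,
          ρ (Algebra.TensorProduct.includeLeft (S := k) a)
              ∈ Ideal.span {(PowerSeries.X : PowerSeries k)} ∧
          ρ (Algebra.TensorProduct.includeRight (R := k) a)
              ∈ Ideal.span {(PowerSeries.X : PowerSeries k)}) →
        (ρ (Algebra.TensorProduct.includeLeft (S := k) h),
          ρ (Algebra.TensorProduct.includeRight (R := k) h)) ∈
          (Submodule.span (PowerSeries k)
            {v : PowerSeries k × PowerSeries k | ∃ g ∈ I,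
              v = (ρ (Algebra.TensorProduct.includeLeft (S := k) g),
                   ρ (Algebra.TensorProduct.includeRight (R := k) g))}
          + (Ideal.span {(PowerSeries.X : PowerSeries k)}) •
            Submodule.span (PowerSeries k)
            {v : PowerSeries k × PowerSeries k | ∃ g ∈ I,
              v = (ρ (Algebra.TensorProduct.includeLeft (S := k) g), 0) ∨
              v = (0, ρ (Algebra.TensorProduct.includeRight (R := k) g))}) := by
  obtain ⟨π, hπ⟩ := exists_algHom_ker_eq_maximalIdeal hres
  exact hπ ▸ weakSubintegral_iff_relativeClosure_general π (hπ.trans hIm.symm).le h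
end
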